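/- arXiv:1712.03504 — 3 statements merged into one kernel-verified Lean document; each statement's English description precedes it below -/
import Mathlib

section
/- Let G be a finite connected simple graph. If G has at least three cycles of length 3 and has no cycle of length 4, then deg(P_G) ≥ 3. -/
open MvPolynomial Pointwise

/-- `ρ({i,j}) = e_i + e_j` : the 0/1 (incidence) vector of an edge. -/
noncomputable def rho {N : ℕ} (e : Sym2 (Fin N)) : Fin N → ℝ :=
  fun v => if v ∈ e then 1 else 0

/-- The edge polytope of a graph on `Fin N`. -/
noncomputable def edgePolytope {N : ℕ} (G : SimpleGraph (Fin N)) : Set (Fin N → ℝ) :=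
  convexHull ℝ (rho '' G.edgeSet)

/-- Number of lattice points of the `t`-th dilation (`= 1` for `t = 0`). -/
noncomputable def ehr {N : ℕ} (P : Set (Fin N → ℝ)) (t : ℕ) : ℕ :=
  if t = 0 then 1 else Nat.card {x : Fin N → ℤ // (fun i => (x i : ℝ)) ∈ (t : ℝ) • P}

/-- The dimension of a polytope: the rank of the direction of its affine span. -/
noncomputable def polyDim {N : ℕ} (P : Set (Fin N → ℝ)) : ℕ :=
  Module.finrank ℝ (affineSpan ℝ P).direction

/-- The `i`-th coefficient of `(1-λ)^{d+1} (1 + Σ_{t≥1} |tP ∩ Z^N| λ^t)`. -/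
noncomputable def deltaCoeff {N : ℕ} (P : Set (Fin N → ℝ)) (i : ℕ) : ℤ :=
  ∑ j ∈ Finset.range (i + 1),
    (-1 : ℤ) ^ j * (Nat.choose (polyDim P + 1) j : ℤ) * (ehr P (i - j) : ℤ)

/-- The degree of the δ-polynomial of `P`. -/
noncomputable def polyDeg {N : ℕ} (P : Set (Fin N → ℝ)) : ℕ :=
  sSup {i : ℕ | deltaCoeff P i ≠ 0}

/-- The monomial `t_i t_j s` attached to an edge `{i,j}`; `s` is the variable `none`. -/
noncomputable def edgeMonom (K : Type*) [Field K] {V : Type*} (e : Sym2 V) :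
    MvPolynomial (Option V) K :=
  Sym2.lift ⟨fun i j => X (some i) * X (some j) * X none, fun i j => by ring⟩ e

/-- The edge ring `K[G]`, the subalgebra generated by the monomials `t^{ρ(e)} s`. -/
noncomputable def edgeRing (K : Type*) [Field K] {V : Type*} (G : SimpleGraph V) :
    Subalgebra K (MvPolynomial (Option V) K) :=
  Algebra.adjoin K (edgeMonom K '' G.edgeSet)

/-- The toric ideal `I_G`: kernel of `x_e ↦ t^{ρ(e)} s`. -/
noncomputable def toricIdeal (K : Type*) [Field K] {V : Type*} (G : SimpleGraph V) :
    Ideal (MvPolynomial G.edgeSet K) :=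
  RingHom.ker (MvPolynomial.aeval (fun e : G.edgeSet => edgeMonom K (e : Sym2 V)) :
    MvPolynomial G.edgeSet K →ₐ[K] MvPolynomial (Option V) K)

/-- `S/I` has a `q`-linear (minimal graded free) resolution: there is a graded free
resolution of `S/I` in which the free module at homological step `i ≥ 1` is generated
in the single degree `q + i - 1`; equivalently all Betti numbers `β_{i,j}` with
`j ≠ q + i - 1` vanish. -/
def HasLinearResolution {σ K : Type*} [Field K] (q : ℕ)
    (I : Ideal (MvPolynomial σ K)) : Prop :=
  ∃ (b : ℕ → ℕ)
    (φ₀ : (Fin (b 0) →₀ MvPolynomial σ K) →ₗ[MvPolynomial σ K] MvPolynomial σ K)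
    (φ : ∀ i : ℕ,
      (Fin (b (i + 1)) →₀ MvPolynomial σ K) →ₗ[MvPolynomial σ K]
        (Fin (b i) →₀ MvPolynomial σ K)),
    LinearMap.range φ₀ = I ∧
    LinearMap.ker φ₀ = LinearMap.range (φ 0) ∧
    (∀ i, LinearMap.ker (φ i) = LinearMap.range (φ (i + 1))) ∧
    (∀ j, (φ₀ (Finsupp.single j 1)).IsHomogeneous q) ∧
    (∀ i j k, ((φ i (Finsupp.single j 1)) k).IsHomogeneous 1)


section Triangulation

variable {ι V : Type*} [DecidableEq ι] [AddCommGroup V] [Module ℝ V]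

/-- `c` restricted to `B` is the family of coordinate functionals of the basis `v i`, `i ∈ B`. -/
def IsDualFamily (v : ι → V) (B : Finset ι) (c : ι → V →ₗ[ℝ] ℝ) : Prop :=
  (∀ i ∈ B, ∀ j ∈ B, c i (v j) = if i = j then 1 else 0) ∧ ∀ x, ∑ i ∈ B, c i x • v i = x

/-- The vectors `v i`, `i ∈ B`, form a basis. -/
def IsBase (v : ι → V) (B : Finset ι) : Prop := ∃ c, IsDualFamily v B c

open Classical in
/-- The coordinate functionals of a base. -/
noncomputable def baseCoord (v : ι → V) (B : Finset ι) : ι → V →ₗ[ℝ] ℝ :=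
  if h : IsBase v B then h.choose else 0

theorem IsBase.isDualFamily {v : ι → V} {B : Finset ι} (h : IsBase v B) :
    IsDualFamily v B (baseCoord v B) := by
  rw [baseCoord, dif_pos h]
  exact h.choose_spec

theorem IsBase.sum_baseCoord {v : ι → V} {B : Finset ι} (h : IsBase v B) (x : V) :
    ∑ i ∈ B, baseCoord v B i x • v i = x := h.isDualFamily.2 x

theorem IsBase.baseCoord_apply {v : ι → V} {B : Finset ι} (h : IsBase v B) {i j : ι}
    (hi : i ∈ B) (hj : j ∈ B) : baseCoord v B i (v j) = if i = j then 1 else 0 :=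
  h.isDualFamily.1 i hi j hj

theorem IsBase.map_eq_sum {v : ι → V} {B : Finset ι} (h : IsBase v B) (l : V →ₗ[ℝ] ℝ) (x : V) :
    l x = ∑ i ∈ B, baseCoord v B i x * l (v i) := by
  conv_lhs => rw [← h.sum_baseCoord x]
  simp [map_sum]

/-- The linear functional taking the values `w i` on the base vectors `v i`, `i ∈ B`. -/
noncomputable def weightFun (v : ι → V) (w : ι → ℝ) (B : Finset ι) : V →ₗ[ℝ] ℝ :=
  ∑ i ∈ B, w i • baseCoord v B i

theorem IsBase.weightFun_apply {v : ι → V} {w : ι → ℝ} {B : Finset ι} (h : IsBase v B) {j : ι}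
    (hj : j ∈ B) : weightFun v w B (v j) = w j := by
  rw [weightFun, LinearMap.sum_apply, Finset.sum_eq_single j]
  · simp [h.baseCoord_apply hj hj]
  · intro i hi hij
    simp [h.baseCoord_apply hi hj, hij]
  · exact fun hn => absurd hj hn

theorem IsBase.eq_weightFun {v : ι → V} {w : ι → ℝ} {B : Finset ι} (h : IsBase v B)
    {l : V →ₗ[ℝ] ℝ} (hl : ∀ i ∈ B, l (v i) = w i) : weightFun v w B = l := by
  ext x
  rw [h.map_eq_sum, h.map_eq_sum l]
  refine Finset.sum_congr rfl fun i hi => ?_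
  rw [h.weightFun_apply hi, hl i hi]

theorem IsBase.exchange {v : ι → V} {B : Finset ι} (h : IsBase v B) {e f : ι} (he : e ∈ B)
    (hf : f ∉ B) (hef : baseCoord v B e (v f) ≠ 0) : IsBase v (insert f (B.erase e)) := by
  set c := baseCoord v B with hc
  refine ⟨fun i => if i = f then (c e (v f))⁻¹ • c e else c i - (c i (v f) / c e (v f)) • c e,
    ?_, ?_⟩
  · intro i hi j hj
    rw [Finset.mem_insert, Finset.mem_erase] at hi hj
    have key : ∀ i ∈ B, ∀ j ∈ B, c i (v j) = if i = j then 1 else 0 := h.isDualFamily.1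
    rcases hi with rfl | ⟨hie, hi⟩ <;> rcases hj with rfl | ⟨hje, hj⟩
    · simp [hef]
    · have : i ≠ j := fun hh => hf (hh ▸ hj)
      simp [key e he j hj, this, hje.symm]
    · have : i ≠ j := fun hh => hf (hh ▸ hi)
      simp [this, hef]
    · have : i ≠ f := fun hh => hf (hh ▸ hi)
      simp [this, key e he j hj, key i hi j hj, hje.symm]
  · intro x
    have hfe : f ∉ B.erase e := fun hh => hf (Finset.mem_of_mem_erase hh)
    have h1 : ∀ y, ∑ i ∈ B.erase e, c i y • v i = y - c e y • v e := fun y => by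
      rw [Finset.sum_erase_eq_sub he, hc, h.sum_baseCoord]
    rw [Finset.sum_insert hfe]
    have h2 : ∑ i ∈ B.erase e, (if i = f then (c e (v f))⁻¹ • c e
        else c i - (c i (v f) / c e (v f)) • c e) x • v i
        = ∑ i ∈ B.erase e, c i x • v i
          - (c e x / c e (v f)) • ∑ i ∈ B.erase e, c i (v f) • v i := by
      rw [Finset.smul_sum, ← Finset.sum_sub_distrib]
      refine Finset.sum_congr rfl fun i hi => ?_
      have : i ≠ f := fun hh => hfe (hh ▸ hi)
      simp only [this, if_false, LinearMap.sub_apply, LinearMap.smul_apply, smul_eq_mul, sub_smul,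
        smul_smul]
      congr 2
      ring
    rw [h2, h1, h1]
    simp only [if_true, LinearMap.smul_apply, smul_eq_mul, smul_sub, smul_smul]
    rw [div_mul_cancel₀ _ hef, div_eq_inv_mul]
    abel

/-- A cell of the regular triangulation induced by the weights `w`. -/
def IsCell (v : ι → V) (w : ι → ℝ) (B : Finset ι) : Prop :=
  IsBase v B ∧ ∀ f ∉ B, weightFun v w B (v f) < w f

theorem IsCell.weightFun_le {v : ι → V} {w : ι → ℝ} {B : Finset ι} (h : IsCell v w B) (f : ι) :
    weightFun v w B (v f) ≤ w f := by
  by_cases hf : f ∈ B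
  · exact (h.1.weightFun_apply hf).le
  · exact (h.2 f hf).le

/-- No base other than through its own members is tight for `w`. -/
def GenericWeight (v : ι → V) (w : ι → ℝ) : Prop :=
  ∀ B, IsBase v B → ∀ f ∉ B, weightFun v w B (v f) ≠ w f

/-- The half-open cone over the base `B`, in which the faces not visible along `q` are kept. -/
def HalfOpenCone (v : ι → V) (q : V) (B : Finset ι) (x : V) : Prop :=
  ∀ i ∈ B, 0 < baseCoord v B i x ∨ baseCoord v B i x = 0 ∧ 0 < baseCoord v B i q

theorem HalfOpenCone.nonneg {v : ι → V} {q : V} {B : Finset ι} {x : V}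
    (h : HalfOpenCone v q B x) {i : ι} (hi : i ∈ B) : 0 ≤ baseCoord v B i x := by
  rcases h i hi with h | h
  · exact h.le
  · exact h.1.ge

/-- One step of the simplex method. -/
theorem IsCell.pivot [Fintype ι] {v : ι → V} {w : ι → ℝ} (hw : GenericWeight v w) {B : Finset ι}
    (h : IsCell v w B) {e : ι} (he : e ∈ B) (hneg : ∃ f, baseCoord v B e (v f) < 0) :
    ∃ B', IsCell v w B' ∧ ∃ g : ℝ, 0 < g ∧
      ∀ x, weightFun v w B' x = weightFun v w B x - g * baseCoord v B e x := by
  set c := baseCoord v B e with hc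
  obtain ⟨f, hf, hmin⟩ := Finset.exists_min_image (Finset.univ.filter fun f => c (v f) < 0)
    (fun f => (w f - weightFun v w B (v f)) / (-c (v f)))
    (by obtain ⟨f, hf⟩ := hneg; exact ⟨f, by simpa using hf⟩)
  simp only [Finset.mem_filter, Finset.mem_univ, true_and] at hf hmin
  have hfB : f ∉ B := fun hfB => by
    rw [hc, h.1.baseCoord_apply he hfB] at hf
    split_ifs at hf <;> linarith
  have hB' := h.1.exchange he hfB hf.ne
  set g := (w f - weightFun v w B (v f)) / (-c (v f)) with hg
  have hgpos : 0 < g := div_pos (sub_pos.2 (h.2 f hfB)) (neg_pos.2 hf)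
  have hfun : weightFun v w (insert f (B.erase e)) = weightFun v w B - g • c := by
    refine hB'.eq_weightFun fun i hi => ?_
    rw [Finset.mem_insert, Finset.mem_erase] at hi
    simp only [LinearMap.sub_apply, LinearMap.smul_apply, smul_eq_mul]
    rcases hi with rfl | ⟨hie, hi⟩
    · rw [hg]
      field_simp [hf.ne]
      ring
    · rw [h.1.weightFun_apply hi, hc, h.1.baseCoord_apply he hi, if_neg hie.symm]
      ring
  refine ⟨_, ⟨hB', fun k hk => lt_of_le_of_ne ?_ (hw _ hB' k hk)⟩, g, hgpos, fun x => by
    simp [hfun]⟩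
  simp only [hfun, LinearMap.sub_apply, LinearMap.smul_apply, smul_eq_mul]
  rcases le_or_gt 0 (c (v k)) with h0 | h0
  · have := h.weightFun_le k
    have := mul_nonneg hgpos.le h0
    linarith
  · have := hmin k h0
    rw [le_div_iff₀ (neg_pos.2 h0)] at this
    linarith

theorem exists_cell_halfOpenCone [Fintype ι] {v : ι → V} {w : ι → ℝ} (hw : GenericWeight v w)
    {B₀ : Finset ι} (h₀ : IsCell v w B₀) {q x : V} {a b : ι → ℝ} (ha : ∀ i, 0 ≤ a i)
    (hb : ∀ i, 0 ≤ b i) (hx : x = ∑ i, a i • v i) (hq : q = ∑ i, b i • v i)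
    (hgen : ∀ B, IsBase v B → ∀ i ∈ B, baseCoord v B i q ≠ 0) :
    ∃ B, IsCell v w B ∧ HalfOpenCone v q B x := by
  classical
  obtain ⟨B, hB, hmax⟩ := Finset.exists_max_image (Finset.univ.filter fun B => IsCell v w B)
    (fun B => toLex (weightFun v w B x, weightFun v w B q)) ⟨B₀, by simpa using h₀⟩
  simp only [Finset.mem_filter, Finset.mem_univ, true_and] at hB hmax
  refine ⟨B, hB, fun e he => ?_⟩
  by_contra hcon
  push Not at hcon
  obtain ⟨h1, h2⟩ := hcon
  have hneg : ∃ f, baseCoord v B e (v f) < 0 := by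
    by_contra hall
    push Not at hall
    have hx0 : 0 ≤ baseCoord v B e x := by
      rw [hx, map_sum]
      exact Finset.sum_nonneg fun i _ => by simpa using mul_nonneg (ha i) (hall i)
    have hq0 : 0 ≤ baseCoord v B e q := by
      rw [hq, map_sum]
      exact Finset.sum_nonneg fun i _ => by simpa using mul_nonneg (hb i) (hall i)
    exact hgen B hB.1 e he (le_antisymm (h2 (le_antisymm h1 hx0)) hq0)
  obtain ⟨B', hB', g, hg, hfun⟩ := hB.pivot hw he hneg
  have hlex := hmax B' hB'
  rw [Prod.Lex.toLex_le_toLex] at hlex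
  simp only [hfun] at hlex
  rcases h1.lt_or_eq with h1 | h1
  · have := mul_neg_of_pos_of_neg hg h1
    rcases hlex with h | ⟨h, -⟩ <;> linarith
  · have := mul_neg_of_pos_of_neg hg (lt_of_le_of_ne (h2 h1) (hgen B hB.1 e he))
    rw [h1, mul_zero, sub_zero] at hlex
    rcases hlex with h | ⟨-, h⟩ <;> linarith

theorem IsCell.weightFun_le_of_halfOpenCone {v : ι → V} {w : ι → ℝ} {B B' : Finset ι} {q x : V}
    (h : IsCell v w B) (h' : IsCell v w B') (hx' : HalfOpenCone v q B' x) :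
    weightFun v w B x ≤ weightFun v w B' x := by
  rw [h'.1.map_eq_sum, h'.1.map_eq_sum (weightFun v w B')]
  refine Finset.sum_le_sum fun i hi => mul_le_mul_of_nonneg_left ?_ (hx'.nonneg hi)
  rw [h'.1.weightFun_apply hi]
  exact h.weightFun_le i

theorem IsCell.subset_or_weightFun_lt {v : ι → V} {w : ι → ℝ} {B B' : Finset ι} {q x : V}
    (h : IsCell v w B) (h' : IsCell v w B') (hx : HalfOpenCone v q B x)
    (hx' : HalfOpenCone v q B' x) :
    weightFun v w B q ≤ weightFun v w B' q ∧
      (B' ⊆ B ∨ weightFun v w B q < weightFun v w B' q) := by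
  have heq : weightFun v w B x = weightFun v w B' x :=
    le_antisymm (h.weightFun_le_of_halfOpenCone h' hx') (h'.weightFun_le_of_halfOpenCone h hx)
  rw [h'.1.map_eq_sum, h'.1.map_eq_sum (weightFun v w B'),
    Finset.sum_eq_sum_iff_of_le fun i hi => mul_le_mul_of_nonneg_left
      (by rw [h'.1.weightFun_apply hi]; exact h.weightFun_le i) (hx'.nonneg hi)] at heq
  have hpos : ∀ i ∈ B', i ∉ B → 0 < baseCoord v B' i q := fun i hi hiB => by
    rcases hx' i hi with h0 | h0
    · have := mul_left_cancel₀ h0.ne' (heq i hi)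
      rw [h'.1.weightFun_apply hi] at this
      exact absurd this (h.2 i hiB).ne
    · exact h0.2
  have hle : ∀ i ∈ B', baseCoord v B' i q * weightFun v w B (v i) ≤
      baseCoord v B' i q * weightFun v w B' (v i) := fun i hi => by
    rw [h'.1.weightFun_apply hi]
    by_cases hiB : i ∈ B
    · rw [h.1.weightFun_apply hiB]
    · exact mul_le_mul_of_nonneg_left (h.weightFun_le i) (hpos i hi hiB).le
  rw [h'.1.map_eq_sum, h'.1.map_eq_sum (weightFun v w B')]
  refine ⟨Finset.sum_le_sum hle, or_iff_not_imp_left.2 fun hsub => ?_⟩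
  obtain ⟨i, hi, hiB⟩ := Finset.not_subset.1 hsub
  refine Finset.sum_lt_sum hle ⟨i, hi, ?_⟩
  rw [h'.1.weightFun_apply hi]
  exact mul_lt_mul_of_pos_left (h.2 i hiB) (hpos i hi hiB)

theorem IsCell.eq_of_halfOpenCone {v : ι → V} {w : ι → ℝ} {B B' : Finset ι} {q x : V}
    (h : IsCell v w B) (h' : IsCell v w B') (hx : HalfOpenCone v q B x)
    (hx' : HalfOpenCone v q B' x) : B = B' := by
  obtain ⟨h1, h2⟩ := h.subset_or_weightFun_lt h' hx hx'
  obtain ⟨h3, h4⟩ := h'.subset_or_weightFun_lt h hx' hx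
  refine Finset.Subset.antisymm (h4.resolve_right h1.not_gt) (h2.resolve_right h3.not_gt)

theorem exists_pos_and_ne_zero {W : Type*} [AddCommGroup W] [Module ℝ W]
    (Φ Ψ : Finset (W →ₗ[ℝ] ℝ)) (hΨ : (0 : W →ₗ[ℝ] ℝ) ∉ Ψ) {u : W} (hu : ∀ φ ∈ Φ, 0 < φ u) :
    ∃ u', (∀ φ ∈ Φ, 0 < φ u') ∧ ∀ ψ ∈ Ψ, ψ u' ≠ 0 := by
  classical
  induction Ψ using Finset.induction_on with
  | empty => exact ⟨u, hu, by simp⟩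
  | insert ψ Ψ _ ih =>
    obtain ⟨u', h1, h2⟩ := ih fun h => hΨ (Finset.mem_insert_of_mem h)
    by_cases h0 : ψ u' = 0
    · obtain ⟨z, hz⟩ : ∃ z, ψ z ≠ 0 := by
        by_contra hall
        push Not at hall
        exact hΨ ((LinearMap.ext hall : ψ = 0) ▸ Finset.mem_insert_self _ _)
      have hcont : ∀ φ : W →ₗ[ℝ] ℝ, Filter.Tendsto (fun ε : ℝ => φ (u' + ε • z))
          (nhdsWithin 0 (Set.Ioi 0)) (nhds (φ u')) := fun φ => by
        have : Continuous fun ε : ℝ => φ (u' + ε • z) := by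
          simp only [map_add, map_smul, smul_eq_mul]
          fun_prop
        simpa using (this.tendsto 0).mono_left nhdsWithin_le_nhds
      have e1 : ∀ᶠ ε in nhdsWithin (0 : ℝ) (Set.Ioi 0), ∀ φ ∈ Φ, 0 < φ (u' + ε • z) :=
        (Filter.eventually_all_finset Φ).2 fun φ hφ => (hcont φ).eventually_const_lt (h1 φ hφ)
      have e2 : ∀ᶠ ε in nhdsWithin (0 : ℝ) (Set.Ioi 0), ∀ φ ∈ Ψ, φ (u' + ε • z) ≠ 0 :=
        (Filter.eventually_all_finset Ψ).2 fun φ hφ => (hcont φ).eventually_ne (h2 φ hφ)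
      obtain ⟨ε, ⟨h3, h4⟩, h5⟩ := ((e1.and e2).and self_mem_nhdsWithin).exists
      refine ⟨u' + ε • z, h3, fun φ hφ => ?_⟩
      rcases Finset.mem_insert.1 hφ with rfl | hφ
      · simp only [map_add, h0, map_smul, smul_eq_mul, zero_add]
        exact mul_ne_zero (Set.mem_Ioi.1 h5).ne' hz
      · exact h4 φ hφ
    · exact ⟨u', h1, fun φ hφ => by
        rcases Finset.mem_insert.1 hφ with rfl | hφ
        exacts [h0, h2 φ hφ]⟩

theorem IsBase.card_eq_finrank {v : ι → V} {B : Finset ι} (h : IsBase v B) :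
    B.card = Module.finrank ℝ V := by
  have hli : LinearIndependent ℝ fun i : B => v i := by
    rw [Fintype.linearIndependent_iff]
    intro g hg j
    have := congrArg (baseCoord v B j) hg
    rw [map_sum, map_zero, Finset.sum_eq_single j] at this
    · simpa [h.baseCoord_apply j.2 j.2] using this
    · intro i _ hij
      rw [map_smul, h.baseCoord_apply j.2 i.2, if_neg fun hh => hij (Subtype.ext hh.symm),
        smul_zero]
    · simp
  have hsp : ⊤ ≤ Submodule.span ℝ (Set.range fun i : B => v i) := fun x _ => by
    rw [← h.sum_baseCoord x]
    exact Submodule.sum_mem _ fun i hi =>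
      Submodule.smul_mem _ _ (Submodule.subset_span ⟨⟨i, hi⟩, rfl⟩)
  rw [Module.finrank_eq_card_basis (Module.Basis.mk hli hsp), Fintype.card_coe]

theorem exists_isBase_of_linearIndepOn [Fintype ι] {v : ι → V}
    (hv : Submodule.span ℝ (Set.range v) = ⊤) {I : Set ι} (hI : LinearIndepOn ℝ v I) :
    ∃ B : Finset ι, I ⊆ B ∧ IsBase v B := by
  classical
  obtain ⟨B, -, hIB, hspan, hB⟩ := exists_linearIndepOn_extension hI (Set.subset_univ I)
  have hsp : ⊤ ≤ Submodule.span ℝ (Set.range fun i : B => v i) := by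
    rw [← hv, Submodule.span_le, ← Set.image_univ, ← Set.image_eq_range]
    exact hspan
  let b := Module.Basis.mk hB.linearIndependent hsp
  refine ⟨B.toFinset, by simpa using hIB,
    fun i => if h : i ∈ B then b.coord ⟨i, h⟩ else 0, fun i hi j hj => ?_, fun x => ?_⟩
  · rw [Set.mem_toFinset] at hi hj
    have : v j = b ⟨j, hj⟩ := by simp [b]
    simp only [dif_pos hi]
    rw [this, Module.Basis.coord_apply, Module.Basis.repr_self, Finsupp.single_apply]
    simp [eq_comm]
  · conv_rhs => rw [← b.sum_repr x]
    rw [← Finset.sum_coe_sort B.toFinset]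
    refine Fintype.sum_equiv (Equiv.subtypeEquivRight fun i => Set.mem_toFinset) _ _ fun i => ?_
    have hi := Set.mem_toFinset.1 i.2
    simp only [dif_pos hi, Module.Basis.coord_apply, b, Module.Basis.mk_apply]
    rfl

/-- Weights can be chosen generically so that a prescribed base is a cell. -/
theorem exists_genericWeight [Fintype ι] {v : ι → V} {B₀ : Finset ι} (h₀ : IsBase v B₀) :
    ∃ w, GenericWeight v w ∧ IsCell v w B₀ := by
  classical
  let off : (ι → ℝ) →ₗ[ℝ] (ι → ℝ) :=
    LinearMap.pi fun i => if i ∈ B₀ then 0 else LinearMap.proj i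
  have hoff : ∀ u i, off u i = if i ∈ B₀ then 0 else u i := fun u i => by
    by_cases h : i ∈ B₀ <;> simp [off, h]
  let gap (p : Finset ι × ι) : (ι → ℝ) →ₗ[ℝ] ℝ :=
    (LinearMap.proj p.2 - ∑ i ∈ p.1, baseCoord v p.1 i (v p.2) • LinearMap.proj i) ∘ₗ off
  have hgap : ∀ B f u, gap (B, f) u = off u f - weightFun v (off u) B (v f) := fun B f u => by
    simp [gap, weightFun, LinearMap.sum_apply, mul_comm]
  have hsum : ∀ (B : Finset ι) (f k : ι), k ∉ B₀ →
      gap (B, f) (Pi.single k 1) =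
        (if f = k then 1 else 0) - if k ∈ B then baseCoord v B k (v f) else 0 := by
    intro B f k hk
    have h1 : ∀ i, off (Pi.single k 1) i = if i = k then 1 else 0 := fun i => by
      rw [hoff, Pi.single_apply]
      split_ifs with h1 h2 <;> simp_all
    rw [hgap, h1, weightFun, LinearMap.sum_apply]
    congr 1
    simp only [h1, LinearMap.smul_apply, smul_eq_mul, ite_mul, one_mul, zero_mul,
      Finset.sum_ite_eq']
  obtain ⟨u, hu, hne⟩ := exists_pos_and_ne_zero
    (Finset.univ.image fun i : ι => (LinearMap.proj i : (ι → ℝ) →ₗ[ℝ] ℝ))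
    ((Finset.univ.filter fun p : Finset ι × ι => IsBase v p.1 ∧ p.2 ∉ p.1).image gap)
    (by
      simp only [Finset.mem_image, Finset.mem_filter, Finset.mem_univ, true_and, not_exists,
        not_and, and_imp, Prod.forall]
      intro B f hB hf hzero
      by_cases hf0 : f ∈ B₀
      · refine absurd (h₀.baseCoord_apply hf0 hf0) ?_
        rw [hB.map_eq_sum, Finset.sum_eq_zero]
        · simp
        intro i hi
        by_cases hi0 : i ∈ B₀
        · rw [h₀.baseCoord_apply hf0 hi0, if_neg (fun hh : f = i => hf (hh ▸ hi)), mul_zero]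
        · have := hsum B f i hi0
          rw [hzero, if_neg (fun hh : f = i => hf (hh ▸ hi)), if_pos hi] at this
          simp only [LinearMap.zero_apply, zero_sub, zero_eq_neg] at this
          rw [this, zero_mul]
      · have := hsum B f f hf0
        rw [hzero] at this
        simp [hf] at this)
    (u := fun _ => 1) (by simp)
  simp only [Finset.mem_image, Finset.mem_univ, true_and, forall_exists_index,
    forall_apply_eq_imp_iff, LinearMap.proj_apply] at hu
  refine ⟨off u, fun B hB f hf heq => ?_, h₀, fun f hf => ?_⟩
  · refine hne (gap (B, f)) (Finset.mem_image_of_mem _ (by simpa using ⟨hB, hf⟩)) ?_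
    rw [hgap, heq, sub_self]
  · rw [h₀.eq_weightFun (l := 0), hoff, if_neg hf]
    · exact hu f
    · intro i hi
      simp [hoff, hi]

/-- A generic direction in the cone, on the negative side of prescribed facets of a base. -/
theorem exists_generic_direction [Fintype ι] {v : ι → V} {B₀ S : Finset ι} {a : ι → ℝ}
    (ha : ∀ i, 0 ≤ a i) (hS : ∀ i ∈ S, baseCoord v B₀ i (∑ j, a j • v j) < 0) :
    ∃ b : ι → ℝ, (∀ i, 0 ≤ b i) ∧ (∀ i ∈ S, baseCoord v B₀ i (∑ j, b j • v j) < 0) ∧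
      ∀ B, IsBase v B → ∀ i ∈ B, baseCoord v B i (∑ j, b j • v j) ≠ 0 := by
  classical
  let comb : (ι → ℝ) →ₗ[ℝ] V := Fintype.linearCombination ℝ v
  have hcomb : ∀ u, comb u = ∑ j, u j • v j := fun u => Fintype.linearCombination_apply ℝ v u
  have hlarge : ∀ᶠ M : ℝ in Filter.atTop, ∀ i ∈ S,
      baseCoord v B₀ i (comb (fun _ => 1)) + M * baseCoord v B₀ i (comb a) < 0 :=
    (Filter.eventually_all_finset S).2 fun i hi => by
      have h1 : Filter.Tendsto (fun M : ℝ => baseCoord v B₀ i (comb (fun _ => 1)) +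
          M * baseCoord v B₀ i (comb a)) Filter.atTop Filter.atBot :=
        Filter.tendsto_atBot_add_const_left _ _
          (Filter.tendsto_id.atTop_mul_const_of_neg (by rw [hcomb]; exact hS i hi))
      exact h1.eventually_lt_atBot 0
  obtain ⟨M, hM, hM0⟩ := (hlarge.and (Filter.eventually_ge_atTop 0)).exists
  obtain ⟨u, hu, hne⟩ := exists_pos_and_ne_zero
    ((Finset.univ.image fun i : ι => (LinearMap.proj i : (ι → ℝ) →ₗ[ℝ] ℝ)) ∪
      S.image fun i => -(baseCoord v B₀ i ∘ₗ comb))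
    ((Finset.univ.filter fun p : Finset ι × ι => IsBase v p.1 ∧ p.2 ∈ p.1).image
      fun p => baseCoord v p.1 p.2 ∘ₗ comb)
    (by
      simp only [Finset.mem_image, Finset.mem_filter, Finset.mem_univ, true_and, not_exists,
        not_and, and_imp, Prod.forall]
      intro B i hB hi hzero
      have := LinearMap.congr_fun hzero (Pi.single i 1)
      simp [comb, hB.baseCoord_apply hi hi] at this)
    (u := (fun _ => 1) + M • a) (by
      simp only [Finset.mem_union, Finset.mem_image, Finset.mem_univ, true_and]
      rintro φ (⟨i, rfl⟩ | ⟨i, hi, rfl⟩)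
      · simpa using add_pos_of_pos_of_nonneg one_pos (mul_nonneg hM0 (ha i))
      · have := hM i hi
        rw [LinearMap.neg_apply, LinearMap.comp_apply, map_add, map_smul, map_add, map_smul,
          smul_eq_mul]
        linarith)
  simp only [Finset.mem_union, Finset.mem_image, Finset.mem_univ, true_and] at hu
  refine ⟨u, fun i => (hu _ (Or.inl ⟨i, rfl⟩)).le, fun i hi => ?_, fun B hB i hi => ?_⟩
  · simpa [hcomb] using hu _ (Or.inr ⟨i, hi, rfl⟩)
  · rw [← hcomb]
    exact hne _ (Finset.mem_image.2 ⟨(B, i), by simpa using ⟨hB, hi⟩, rfl⟩)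

/-- The half-open fundamental parallelepiped of the base `B`. -/
def IsBoxPoint (v : ι → V) (q : V) (B : Finset ι) (x : V) : Prop :=
  ∀ i ∈ B, (0 < baseCoord v B i q ∧ 0 ≤ baseCoord v B i x ∧ baseCoord v B i x < 1) ∨
    (¬ 0 < baseCoord v B i q ∧ 0 < baseCoord v B i x ∧ baseCoord v B i x ≤ 1)

theorem IsBase.baseCoord_add_sum {v : ι → V} {B : Finset ι} (h : IsBase v B) (x : V) (n : ι → ℕ)
    {i : ι} (hi : i ∈ B) :
    baseCoord v B i (x + ∑ j ∈ B, n j • v j) = baseCoord v B i x + n i := by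
  rw [map_add, map_sum, Finset.sum_eq_single i]
  · simp [h.baseCoord_apply hi hi]
  · intro j hj hji
    simp [h.baseCoord_apply hi hj, hji.symm]
  · exact fun hn => absurd hi hn

theorem IsBoxPoint.halfOpenCone_add {v : ι → V} {q : V} {B : Finset ι} {x : V} (h : IsBase v B)
    (hx : IsBoxPoint v q B x) (n : ι → ℕ) : HalfOpenCone v q B (x + ∑ j ∈ B, n j • v j) := by
  intro i hi
  rw [h.baseCoord_add_sum x n hi]
  have hn : (0 : ℝ) ≤ n i := Nat.cast_nonneg _
  rcases hx i hi with ⟨h1, h2, -⟩ | ⟨-, h2, -⟩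
  · rcases (add_nonneg h2 hn).lt_or_eq with h3 | h3
    exacts [Or.inl h3, Or.inr ⟨h3.symm, h1⟩]
  · exact Or.inl (by linarith)

theorem HalfOpenCone.exists_isBoxPoint {v : ι → V} {q : V} {B : Finset ι} {x : V} (h : IsBase v B)
    (hx : HalfOpenCone v q B x) :
    ∃ y, ∃ n : ι → ℕ, IsBoxPoint v q B y ∧ (∀ i, n i ≠ 0 → i ∈ B) ∧
      x = y + ∑ j ∈ B, n j • v j := by
  classical
  let n : ι → ℕ := fun i => if i ∈ B then
    if 0 < baseCoord v B i q then ⌊baseCoord v B i x⌋₊ else ⌈baseCoord v B i x⌉₊ - 1 else 0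
  have hsub : x = (x - ∑ j ∈ B, n j • v j) + ∑ j ∈ B, n j • v j := by abel
  refine ⟨x - ∑ j ∈ B, n j • v j, n, fun i hi => ?_, fun i hi => ?_, hsub⟩
  · have hco := h.baseCoord_add_sum (x - ∑ j ∈ B, n j • v j) n hi
    rw [← hsub] at hco
    have h0 := hx.nonneg hi
    by_cases hq : 0 < baseCoord v B i q
    · have hn : n i = ⌊baseCoord v B i x⌋₊ := by simp [n, hi, hq]
      rw [hn] at hco
      have := Nat.floor_le h0
      have := Nat.lt_floor_add_one (baseCoord v B i x)
      exact Or.inl ⟨hq, by linarith, by linarith⟩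
    · have hn : n i = ⌈baseCoord v B i x⌉₊ - 1 := by simp [n, hi, hq]
      have hpos : 0 < baseCoord v B i x := (hx i hi).resolve_right fun hh => hq hh.2
      have hc : 1 ≤ ⌈baseCoord v B i x⌉₊ := Nat.ceil_pos.2 hpos
      rw [hn, Nat.cast_sub hc, Nat.cast_one] at hco
      have := Nat.le_ceil (baseCoord v B i x)
      have := Nat.ceil_lt_add_one h0
      exact Or.inr ⟨hq, by linarith, by linarith⟩
  · by_contra hiB
    exact hi (by simp [n, hiB])

theorem IsBoxPoint.eq_of_add_eq {v : ι → V} {q : V} {B : Finset ι} {x y : V} {m n : ι → ℕ}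
    (h : IsBase v B) (hx : IsBoxPoint v q B x) (hy : IsBoxPoint v q B y)
    (hm : ∀ i, m i ≠ 0 → i ∈ B) (hn : ∀ i, n i ≠ 0 → i ∈ B)
    (heq : x + ∑ j ∈ B, m j • v j = y + ∑ j ∈ B, n j • v j) : x = y ∧ m = n := by
  have hmn : m = n := by
    funext i
    by_cases hi : i ∈ B
    · have := congrArg (baseCoord v B i) heq
      rw [h.baseCoord_add_sum x m hi, h.baseCoord_add_sum y n hi] at this
      have h1 : (m i : ℝ) < n i + 1 := by
        rcases hx i hi with ⟨h1, h2, h3⟩ | ⟨h1, h2, h3⟩ <;>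
          rcases hy i hi with ⟨h1', h2', h3'⟩ | ⟨h1', h2', h3'⟩ <;>
          first | exact absurd ‹_› ‹¬ _› | linarith
      have h2 : (n i : ℝ) < m i + 1 := by
        rcases hx i hi with ⟨h1, h2, h3⟩ | ⟨h1, h2, h3⟩ <;>
          rcases hy i hi with ⟨h1', h2', h3'⟩ | ⟨h1', h2', h3'⟩ <;>
          first | exact absurd ‹_› ‹¬ _› | linarith
      norm_cast at h1 h2
      omega
    · rw [not_not.1 (mt (hm i) hi), not_not.1 (mt (hn i) hi)]
  subst hmn
  exact ⟨add_right_cancel heq, rfl⟩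

/-- The points of height `t` of `L` in the cone spanned by the `v i`. -/
def coneSlice [Fintype ι] (v : ι → V) (L : AddSubgroup V) (ht : V →ₗ[ℝ] ℝ) (t : ℕ) : Set V :=
  {x | x ∈ L ∧ (∃ a : ι → ℝ, (∀ i, 0 ≤ a i) ∧ x = ∑ i, a i • v i) ∧ ht x = t}

/-- The points of height `t` of `L` in the half-open parallelepipeds of all cells. -/
def boxSlice (v : ι → V) (w : ι → ℝ) (q : V) (L : AddSubgroup V) (ht : V →ₗ[ℝ] ℝ) (t : ℕ) :
    Set (Finset ι × V) :=
  {p | IsCell v w p.1 ∧ p.2 ∈ L ∧ IsBoxPoint v q p.1 p.2 ∧ ht p.2 = t}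

theorem HalfOpenCone.exists_nonneg_comb [Fintype ι] {v : ι → V} {q : V} {B : Finset ι} {x : V}
    (h : IsBase v B) (hx : HalfOpenCone v q B x) :
    ∃ a : ι → ℝ, (∀ i, 0 ≤ a i) ∧ x = ∑ i, a i • v i := by
  classical
  refine ⟨fun i => if i ∈ B then baseCoord v B i x else 0, fun i => ?_, ?_⟩
  · by_cases hi : i ∈ B
    · simpa [hi] using hx.nonneg hi
    · simp [hi]
  · conv_lhs => rw [← h.sum_baseCoord x]
    simp [ite_smul]

theorem finite_boxSlice [Fintype ι] {v : ι → V} {w : ι → ℝ} {q : V} {L : AddSubgroup V}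
    {ht : V →ₗ[ℝ] ℝ} (hfin : ∀ t, (coneSlice v L ht t).Finite) (t : ℕ) :
    Finite (boxSlice v w q L ht t) := by
  refine Set.Finite.subset (Set.Finite.prod (Set.finite_univ (α := Finset ι)) (hfin t)) ?_
  rintro ⟨B, x⟩ ⟨h1, h2, h3, h4⟩
  exact ⟨Set.mem_univ _, h2,
    by simpa using (h3.halfOpenCone_add h1.1 0).exists_nonneg_comb h1.1, h4⟩

theorem card_coneSlice [Fintype ι] {v : ι → V} {w : ι → ℝ} (hw : GenericWeight v w)
    {B₀ : Finset ι} (h₀ : IsCell v w B₀) {q : V} {b : ι → ℝ} (hb : ∀ i, 0 ≤ b i)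
    (hq : q = ∑ i, b i • v i) (hgen : ∀ B, IsBase v B → ∀ i ∈ B, baseCoord v B i q ≠ 0)
    {L : AddSubgroup V} {ht : V →ₗ[ℝ] ℝ} (hL : ∀ i, v i ∈ L) (hht : ∀ i, ht (v i) = 1)
    (hfin : ∀ t, (coneSlice v L ht t).Finite) (t : ℕ) :
    Nat.card (coneSlice v L ht t) = ∑ p ∈ Finset.HasAntidiagonal.antidiagonal t,
      Nat.card (boxSlice v w q L ht p.1) *
        (Module.finrank ℝ V + p.2 - 1).choose p.2 := by
  classical
  have hhtsum : ∀ (B : Finset ι) (n : ι → ℕ), ht (∑ j ∈ B, n j • v j) = ((∑ j ∈ B, n j : ℕ) : ℝ) :=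
    fun B n => by simp [map_sum, hht]
  have hLsum : ∀ (B : Finset ι) (n : ι → ℕ), ∑ j ∈ B, n j • v j ∈ L :=
    fun B n => L.sum_mem fun j _ => L.nsmul_mem (hL j) _
  have hboxfin := finite_boxSlice (w := w) (q := q) hfin
  let T := Σ p : Finset.HasAntidiagonal.antidiagonal t, Σ x : boxSlice v w q L ht p.1.1,
    Finset.piAntidiag x.1.1 p.1.2
  let F : T → coneSlice v L ht t := fun z =>
    ⟨z.2.1.1.2 + ∑ j ∈ z.2.1.1.1, z.2.2.1 j • v j, by
      obtain ⟨⟨⟨k, l⟩, hp⟩, ⟨⟨B, x⟩, h1, h2, h3, h4⟩, n, hn⟩ := z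
      rw [Finset.HasAntidiagonal.mem_antidiagonal] at hp
      refine ⟨L.add_mem h2 (hLsum _ _), (h3.halfOpenCone_add h1.1 n).exists_nonneg_comb h1.1, ?_⟩
      change ht (x + ∑ j ∈ B, n j • v j) = t
      rw [map_add, show ht x = k from h4, hhtsum, (Finset.mem_piAntidiag.1 hn).1]
      exact_mod_cast hp⟩
  have hF : Function.Bijective F := by
    constructor
    · rintro ⟨⟨⟨k, l⟩, hp⟩, ⟨⟨B, x⟩, h1, h2, h3, h4⟩, n, hn⟩
        ⟨⟨⟨k', l'⟩, hp'⟩, ⟨⟨B', x'⟩, h1', h2', h3', h4'⟩, n', hn'⟩ heq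
      have heq : x + ∑ j ∈ B, n j • v j = x' + ∑ j ∈ B', n' j • v j := congrArg Subtype.val heq
      have hcone := h3.halfOpenCone_add h1.1 n
      have hcone' := h3'.halfOpenCone_add h1'.1 n'
      rw [← heq] at hcone'
      obtain rfl : B = B' := IsCell.eq_of_halfOpenCone h1 h1' hcone hcone'
      rw [Finset.mem_piAntidiag] at hn hn'
      obtain ⟨rfl, rfl⟩ := IsBoxPoint.eq_of_add_eq h1.1 h3 h3' hn.2 hn'.2 heq
      obtain rfl : k = k' := by exact_mod_cast h4.symm.trans h4'
      obtain rfl : l = l' := hn.1.symm.trans hn'.1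
      rfl
    · rintro ⟨x, hxL, ⟨a, ha, hxa⟩, hxt⟩
      obtain ⟨B, hB, hBx⟩ := exists_cell_halfOpenCone hw h₀ ha hb hxa hq hgen
      obtain ⟨y, n, hy, hn, hxy⟩ := hBx.exists_isBoxPoint hB.1
      have hyL : y ∈ L := by
        rw [← L.add_mem_cancel_right (hLsum B n), ← hxy]
        exact hxL
      have hy0 : 0 ≤ ht y := by
        rw [hB.1.map_eq_sum]
        refine Finset.sum_nonneg fun i hi => ?_
        rw [hht, mul_one]
        rcases hy i hi with h | h
        exacts [h.2.1, h.2.1.le]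
      have hsum : ht y + ((∑ j ∈ B, n j : ℕ) : ℝ) = t := by
        rw [← hhtsum, ← map_add, ← hxy, hxt]
      have hle : ∑ j ∈ B, n j ≤ t := by
        have : ((∑ j ∈ B, n j : ℕ) : ℝ) ≤ t := by linarith
        exact_mod_cast this
      refine ⟨⟨⟨(t - ∑ j ∈ B, n j, ∑ j ∈ B, n j), ?_⟩, ⟨(B, y), hB, hyL, hy, ?_⟩, n, ?_⟩, ?_⟩
      · rw [Finset.HasAntidiagonal.mem_antidiagonal]
        exact Nat.sub_add_cancel hle
      · rw [Nat.cast_sub hle]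
        linarith
      · exact Finset.mem_piAntidiag.2 ⟨rfl, hn⟩
      · exact Subtype.ext hxy.symm
  have hcard : ∀ (B : Finset ι) (l : ℕ), IsBase v B →
      Nat.card (Finset.piAntidiag B l) = (Module.finrank ℝ V + l - 1).choose l := by
    intro B l hB
    rw [← hB.card_eq_finrank, ← Finset.card_finsuppAntidiag_nat_eq_choose, Finset.finsuppAntidiag,
      Finset.card_map, Finset.card_attach, Nat.card_eq_fintype_card, Fintype.card_coe]
  rw [← Nat.card_congr (Equiv.ofBijective F hF), Nat.card_sigma,
    ← Finset.sum_coe_sort (Finset.HasAntidiagonal.antidiagonal t)]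
  refine Finset.sum_congr rfl fun p _ => ?_
  have := hboxfin p.1.1
  have := Fintype.ofFinite (boxSlice v w q L ht p.1.1)
  rw [Nat.card_sigma, Finset.sum_congr rfl fun x _ => hcard x.1.1 p.1.2 x.2.1.1]
  simp

theorem exists_hStar [Fintype ι] {v : ι → V} {L : AddSubgroup V} {ht : V →ₗ[ℝ] ℝ}
    (hL : ∀ i, v i ∈ L) (hht : ∀ i, ht (v i) = 1) (hfin : ∀ t, (coneSlice v L ht t).Finite)
    {B₀ S : Finset ι} (h₀ : IsBase v B₀) {a : ι → ℝ} (ha : ∀ i, 0 ≤ a i)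
    (hS : ∀ i ∈ S, baseCoord v B₀ i (∑ j, a j • v j) < 0) {x : V} (hxL : x ∈ L) {k : ℕ}
    (hxk : ht x = k)
    (hxS : ∀ i ∈ B₀, i ∈ S → 0 < baseCoord v B₀ i x ∧ baseCoord v B₀ i x ≤ 1)
    (hxS' : ∀ i ∈ B₀, i ∉ S → 0 ≤ baseCoord v B₀ i x ∧ baseCoord v B₀ i x < 1) :
    ∃ h : ℕ → ℕ, (∀ t, Nat.card (coneSlice v L ht t) =
        ∑ p ∈ Finset.HasAntidiagonal.antidiagonal t,
          h p.1 * (Module.finrank ℝ V + p.2 - 1).choose p.2) ∧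
      (∀ i, h i ≠ 0 → i ≤ Module.finrank ℝ V) ∧ ∃ i, k ≤ i ∧ h i ≠ 0 := by
  classical
  obtain ⟨w, hw, hcell⟩ := exists_genericWeight h₀
  obtain ⟨b, hb, hbS, hgen⟩ := exists_generic_direction ha hS
  set q := ∑ j, b j • v j with hq
  refine ⟨fun i => Nat.card (boxSlice v w q L ht i),
    card_coneSlice hw hcell hb hq hgen hL hht hfin, fun i hi => ?_, ?_⟩
  · obtain ⟨⟨⟨B, y⟩, h1, -, h3, h4⟩⟩ := (Nat.card_ne_zero.1 hi).1
    have : (i : ℝ) ≤ (B.card : ℝ) := by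
      rw [← h4, h1.1.map_eq_sum, Finset.card_eq_sum_ones, Nat.cast_sum]
      refine Finset.sum_le_sum fun j hj => ?_
      rw [hht, mul_one, Nat.cast_one]
      rcases h3 j hj with h | h
      exacts [h.2.2.le, h.2.2]
    rw [← h1.1.card_eq_finrank]
    exact_mod_cast this
  · let n : ι → ℕ := fun i => if ¬ 0 < baseCoord v B₀ i q ∧ baseCoord v B₀ i x = 0 then 1 else 0
    have hbox : IsBoxPoint v q B₀ (x + ∑ j ∈ B₀, n j • v j) := by
      intro i hi
      rw [h₀.baseCoord_add_sum x n hi]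
      by_cases hiS : i ∈ S
      · have hx := hxS i hi hiS
        have : n i = 0 := if_neg fun hh => hx.1.ne' hh.2
        rw [this, Nat.cast_zero, add_zero]
        exact Or.inr ⟨(hbS i hiS).not_gt, hx⟩
      · have hx := hxS' i hi hiS
        by_cases hqi : 0 < baseCoord v B₀ i q
        · have : n i = 0 := if_neg fun hh => hh.1 hqi
          rw [this, Nat.cast_zero, add_zero]
          exact Or.inl ⟨hqi, hx⟩
        · refine Or.inr ⟨hqi, ?_⟩
          by_cases hx0 : baseCoord v B₀ i x = 0
          · have : n i = 1 := if_pos ⟨hqi, hx0⟩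
            rw [this, hx0]
            norm_num
          · have : n i = 0 := if_neg fun hh => hx0 hh.2
            rw [this, Nat.cast_zero, add_zero]
            exact ⟨lt_of_le_of_ne hx.1 (Ne.symm hx0), hx.2.le⟩
    refine ⟨k + ∑ j ∈ B₀, n j, Nat.le_add_right _ _, ?_⟩
    have hmem : (B₀, x + ∑ j ∈ B₀, n j • v j) ∈ boxSlice v w q L ht (k + ∑ j ∈ B₀, n j) :=
      ⟨hcell, L.add_mem hxL (L.sum_mem fun j _ => L.nsmul_mem (hL j) _), hbox, by
        simp [map_sum, hht, hxk]⟩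
    have hfin' : Finite (boxSlice v w q L ht (k + ∑ j ∈ B₀, n j)) :=
      finite_boxSlice hfin _
    exact Nat.card_ne_zero.2 ⟨⟨⟨_, hmem⟩⟩, hfin'⟩

end Triangulation

theorem sum_neg_one_pow_mul_choose_eq {r : ℕ} (hr : 0 < r) {f h : ℕ → ℕ}
    (hf : ∀ t, f t = ∑ p ∈ Finset.HasAntidiagonal.antidiagonal t,
      h p.1 * (r + p.2 - 1).choose p.2) (i : ℕ) :
    ∑ j ∈ Finset.range (i + 1), (-1 : ℤ) ^ j * (r.choose j : ℤ) * (f (i - j) : ℤ) = h i := by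
  have h1 : (PowerSeries.mk fun t => (f t : ℤ)) =
      (PowerSeries.mk fun t => (h t : ℤ)) * (PowerSeries.invOneSubPow ℤ r).val := by
    ext t
    rw [PowerSeries.coeff_mk, hf, PowerSeries.coeff_mul,
      PowerSeries.invOneSubPow_val_eq_mk_sub_one_add_choose_of_pos _ _ hr]
    push_cast
    refine Finset.sum_congr rfl fun p _ => ?_
    rw [PowerSeries.coeff_mk, PowerSeries.coeff_mk, Nat.choose_symm_add,
      show r + p.2 - 1 = r - 1 + p.2 by omega]
  have h2 : ((1 - PowerSeries.X) ^ r : PowerSeries ℤ) * (PowerSeries.mk fun t => (f t : ℤ)) =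
      PowerSeries.mk fun t => (h t : ℤ) := by
    rw [h1, ← PowerSeries.invOneSubPow_inv_eq_one_sub_pow, mul_left_comm]
    simp
  have h3 : ∀ j, PowerSeries.coeff j ((1 - PowerSeries.X) ^ r : PowerSeries ℤ) =
      (-1) ^ j * (r.choose j : ℤ) := by
    intro j
    have : ((1 - PowerSeries.X) ^ r : PowerSeries ℤ) =
        ((((1 + Polynomial.X) ^ r).comp (Polynomial.C (-1) * Polynomial.X) : Polynomial ℤ) :
          PowerSeries ℤ) := by
      simp [sub_eq_add_neg]
    rw [this, Polynomial.coeff_coe, Polynomial.comp_C_mul_X_coeff,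
      Polynomial.coeff_one_add_X_pow, mul_comm]
  have h4 := congrArg (PowerSeries.coeff i) h2
  rw [PowerSeries.coeff_mk, PowerSeries.coeff_mul,
    Finset.Nat.sum_antidiagonal_eq_sum_range_succ_mk] at h4
  simpa [h3] using h4

section EdgePolytope

variable {N : ℕ}

theorem rho_nonneg (e : Sym2 (Fin N)) (i : Fin N) : 0 ≤ rho e i := by
  unfold rho
  split_ifs <;> norm_num

theorem rho_le_one (e : Sym2 (Fin N)) (i : Fin N) : rho e i ≤ 1 := by
  unfold rho
  split_ifs <;> norm_num

theorem sum_rho {G : SimpleGraph (Fin N)} {e : Sym2 (Fin N)} (he : e ∈ G.edgeSet) :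
    ∑ i, rho e i = 2 := by
  induction e with
  | h a b =>
    have hab : a ≠ b := G.ne_of_adj he
    have : ∀ i, rho s(a, b) i = (if i = a then 1 else 0) + if i = b then 1 else 0 := fun i => by
      by_cases h1 : i = a <;> by_cases h2 : i = b <;> simp_all [rho]
    simp only [this, Finset.sum_add_distrib, Finset.sum_ite_eq', Finset.mem_univ, if_true]
    norm_num

/-- The linear span of the vertices of the edge polytope. -/
def edgeSpan (G : SimpleGraph (Fin N)) : Submodule ℝ (Fin N → ℝ) :=
  Submodule.span ℝ (rho '' G.edgeSet)

/-- The vertices of the edge polytope as elements of their span. -/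
noncomputable def edgeVec (G : SimpleGraph (Fin N)) (e : G.edgeSet) : edgeSpan G :=
  ⟨rho e.1, Submodule.subset_span ⟨e.1, e.2, rfl⟩⟩

/-- The integer points of the span of the edge polytope. -/
def edgeLattice (G : SimpleGraph (Fin N)) : AddSubgroup (edgeSpan G) :=
  (((Int.castAddHom ℝ).compLeft (Fin N)).range).comap (edgeSpan G).subtype.toAddMonoidHom

/-- The linear functional equal to `1` on the edge polytope. -/
noncomputable def edgeHeight (G : SimpleGraph (Fin N)) : edgeSpan G →ₗ[ℝ] ℝ :=
  ((1 / 2 : ℝ) • ∑ i, LinearMap.proj i) ∘ₗ (edgeSpan G).subtype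

theorem mem_edgeLattice {G : SimpleGraph (Fin N)} {x : edgeSpan G} :
    x ∈ edgeLattice G ↔ ∃ z : Fin N → ℤ, (fun i => (z i : ℝ)) = x := Iff.rfl

theorem edgeVec_mem_edgeLattice (G : SimpleGraph (Fin N)) (e : G.edgeSet) :
    edgeVec G e ∈ edgeLattice G := by
  classical
  refine mem_edgeLattice.2 ⟨fun i => if i ∈ e.1 then 1 else 0, ?_⟩
  ext i
  simp only [edgeVec, rho]
  split_ifs <;> simp

theorem edgeHeight_apply (G : SimpleGraph (Fin N)) (x : edgeSpan G) :
    edgeHeight G x = (1 / 2) * ∑ i, x.1 i := by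
  simp [edgeHeight]

theorem edgeHeight_edgeVec (G : SimpleGraph (Fin N)) (e : G.edgeSet) :
    edgeHeight G (edgeVec G e) = 1 := by
  rw [edgeHeight_apply, edgeVec, sum_rho e.2]
  norm_num

theorem span_range_edgeVec (G : SimpleGraph (Fin N)) :
    Submodule.span ℝ (Set.range (edgeVec G)) = ⊤ := by
  have : Set.range (edgeVec G) = (Subtype.val : edgeSpan G → Fin N → ℝ) ⁻¹' (rho '' G.edgeSet) := by
    ext x
    constructor
    · rintro ⟨e, rfl⟩
      exact ⟨e.1, e.2, rfl⟩
    · rintro ⟨e, he, hx⟩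
      exact ⟨⟨e, he⟩, Subtype.ext hx⟩
  rw [this]
  exact Submodule.span_span_coe_preimage

open Classical in
theorem mem_edgePolytope_iff {G : SimpleGraph (Fin N)} {x : Fin N → ℝ} :
    x ∈ edgePolytope G ↔ ∃ a : G.edgeSet → ℝ, (∀ e, 0 ≤ a e) ∧ ∑ e, a e = 1 ∧
      x = ∑ e, a e • rho e.1 := by
  constructor
  · intro hx
    have hsub : edgePolytope G ⊆
        Fintype.linearCombination ℝ (fun e : G.edgeSet => rho e.1) '' stdSimplex ℝ G.edgeSet := by
      refine convexHull_min ?_ ((convex_stdSimplex ℝ G.edgeSet).linear_image _)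
      rintro _ ⟨e, he, rfl⟩
      exact ⟨Pi.single ⟨e, he⟩ 1, single_mem_stdSimplex ℝ _, by simp⟩
    obtain ⟨a, ha, rfl⟩ := hsub hx
    exact ⟨a, ha.1, ha.2, Fintype.linearCombination_apply ℝ _ a⟩
  · rintro ⟨a, ha, hsum, rfl⟩
    exact mem_convexHull_of_exists_fintype a (fun e => rho e.1) ha hsum (fun e => ⟨e.1, e.2, rfl⟩)
      rfl

open Classical in
theorem edgeHeight_sum (G : SimpleGraph (Fin N)) (a : G.edgeSet → ℝ) :
    edgeHeight G (∑ e, a e • edgeVec G e) = ∑ e, a e := by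
  simp [map_sum, edgeHeight_edgeVec]

open Classical in
theorem coe_sum_edgeVec (G : SimpleGraph (Fin N)) (a : G.edgeSet → ℝ) :
    ((∑ e, a e • edgeVec G e : edgeSpan G) : Fin N → ℝ) = ∑ e, a e • rho e.1 := by
  simp [edgeVec]

open Classical in
theorem coneSlice_edgeVec_finite (G : SimpleGraph (Fin N)) (t : ℕ) :
    (coneSlice (edgeVec G) (edgeLattice G) (edgeHeight G) t).Finite := by
  refine Set.Finite.of_injOn (f := Subtype.val) (t := (fun (z : Fin N → ℤ) i => (z i : ℝ)) ''
    Set.Icc (0 : Fin N → ℤ) (fun _ => (t : ℤ))) ?_ Subtype.val_injective.injOn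
    ((Set.finite_Icc _ _).image _)
  rintro x ⟨hL, ⟨a, ha, rfl⟩, ht⟩
  obtain ⟨z, hz⟩ := mem_edgeLattice.1 hL
  rw [edgeHeight_sum] at ht
  rw [coe_sum_edgeVec] at hz
  have hzi : ∀ i, (z i : ℝ) = ∑ e, a e * rho e.1 i := fun i => by
    have := congrFun hz i
    simpa [Finset.sum_apply] using this
  refine ⟨z, ⟨fun i => ?_, fun i => ?_⟩, by rw [coe_sum_edgeVec]; exact hz⟩
  · have : (0 : ℝ) ≤ z i := by
      rw [hzi]
      exact Finset.sum_nonneg fun e _ => mul_nonneg (ha e) (rho_nonneg _ _)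
    exact_mod_cast this
  · have : (z i : ℝ) ≤ t := by
      rw [hzi, ← ht]
      exact Finset.sum_le_sum fun e _ => mul_le_of_le_one_right (ha e) (rho_le_one _ _)
    exact_mod_cast this

open Classical in
theorem ehr_edgePolytope (G : SimpleGraph (Fin N)) (t : ℕ) :
    ehr (edgePolytope G) t =
      Nat.card (coneSlice (edgeVec G) (edgeLattice G) (edgeHeight G) t) := by
  rcases Nat.eq_zero_or_pos t with rfl | htpos
  · have : coneSlice (edgeVec G) (edgeLattice G) (edgeHeight G) 0 = {0} := by
      ext x
      constructor
      · rintro ⟨-, ⟨a, ha, rfl⟩, h0⟩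
        rw [edgeHeight_sum, Nat.cast_zero, Finset.sum_eq_zero_iff_of_nonneg fun e _ => ha e] at h0
        exact Finset.sum_eq_zero fun e he => by rw [h0 e he, zero_smul]
      · rintro rfl
        exact ⟨zero_mem _, ⟨0, fun _ => le_rfl, by simp⟩, by simp⟩
    simp [ehr, this]
  · have ht0 : (t : ℝ) ≠ 0 := Nat.cast_ne_zero.2 htpos.ne'
    have hmem : ∀ y : Fin N → ℝ, y ∈ (t : ℝ) • edgePolytope G ↔ ∃ a : G.edgeSet → ℝ,
        (∀ e, 0 ≤ a e) ∧ ∑ e, a e = t ∧ y = ∑ e, a e • rho e.1 := by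
      intro y
      rw [Set.mem_smul_set]
      constructor
      · rintro ⟨x, hx, rfl⟩
        obtain ⟨a, ha, hsum, rfl⟩ := mem_edgePolytope_iff.1 hx
        refine ⟨fun e => t * a e, fun e => mul_nonneg (Nat.cast_nonneg _) (ha e), ?_, ?_⟩
        · rw [← Finset.mul_sum, hsum, mul_one]
        · simp [Finset.smul_sum, mul_smul]
      · rintro ⟨a, ha, hsum, rfl⟩
        refine ⟨∑ e, ((t : ℝ)⁻¹ * a e) • rho e.1, mem_edgePolytope_iff.2 ⟨_, fun e =>
          mul_nonneg (inv_nonneg.2 (Nat.cast_nonneg _)) (ha e), ?_, rfl⟩, ?_⟩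
        · rw [← Finset.mul_sum, hsum, inv_mul_cancel₀ ht0]
        · simp [Finset.smul_sum, ← mul_smul, ht0]
    rw [ehr, if_neg htpos.ne']
    have hcast : ∀ x : coneSlice (edgeVec G) (edgeLattice G) (edgeHeight G) t,
        ∃ z : Fin N → ℤ, (fun i => (z i : ℝ)) = x.1.1 := fun x => mem_edgeLattice.1 x.2.1
    choose Z hZ using hcast
    symm
    refine Nat.card_congr (Equiv.ofBijective (fun x => ⟨Z x, ?_⟩) ⟨fun x y hxy => ?_, ?_⟩)
    · obtain ⟨a, ha, hx⟩ := x.2.2.1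
      rw [hZ, hmem]
      refine ⟨a, ha, ?_, ?_⟩
      · rw [← edgeHeight_sum, ← hx, x.2.2.2]
      · rw [hx, coe_sum_edgeVec]
    · refine Subtype.ext (Subtype.ext ?_)
      rw [← hZ, ← hZ, show Z x = Z y from congrArg Subtype.val hxy]
    · rintro ⟨z, hz⟩
      obtain ⟨a, ha, hsum, hza⟩ := (hmem _).1 hz
      have hx : (fun i => (z i : ℝ)) = (∑ e, a e • edgeVec G e : edgeSpan G).1 := by
        rw [hza, coe_sum_edgeVec]
      refine ⟨⟨∑ e, a e • edgeVec G e, mem_edgeLattice.2 ⟨z, hx⟩, ⟨a, ha, rfl⟩, ?_⟩,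
        Subtype.ext ?_⟩
      · rw [edgeHeight_sum, hsum]
      · funext i
        have := congrFun ((hZ ⟨∑ e, a e • edgeVec G e, mem_edgeLattice.2 ⟨z, hx⟩, ⟨a, ha, rfl⟩,
          by rw [edgeHeight_sum, hsum]⟩).trans hx.symm) i
        exact_mod_cast this

theorem polyDim_add_one {G : SimpleGraph (Fin N)} {e : Sym2 (Fin N)} (he : e ∈ G.edgeSet) :
    polyDim (edgePolytope G) + 1 = Module.finrank ℝ (edgeSpan G) := by
  have hdir : (affineSpan ℝ (edgePolytope G)).direction = vectorSpan ℝ (rho '' G.edgeSet) := by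
    rw [edgePolytope, affineSpan_convexHull, direction_affineSpan]
  have hmem : rho e ∈ rho '' G.edgeSet := ⟨e, he, rfl⟩
  have hnot : rho e ∉ vectorSpan ℝ (rho '' G.edgeSet) := by
    have hle : vectorSpan ℝ (rho '' G.edgeSet) ≤
        LinearMap.ker (∑ i, LinearMap.proj i : (Fin N → ℝ) →ₗ[ℝ] ℝ) := by
      rw [vectorSpan_def, Submodule.span_le]
      rintro _ ⟨_, ⟨f, hf, rfl⟩, _, ⟨g, hg, rfl⟩, rfl⟩
      simp [sum_rho hf, sum_rho hg]
    intro h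
    have := hle h
    simp [sum_rho he] at this
  have hsup : edgeSpan G = vectorSpan ℝ (rho '' G.edgeSet) ⊔ Submodule.span ℝ {rho e} := by
    apply le_antisymm
    · rw [edgeSpan, Submodule.span_le]
      intro x hx
      have : x = (x -ᵥ rho e) + rho e := by simp
      rw [this]
      exact add_mem (Submodule.mem_sup_left (vsub_mem_vectorSpan ℝ hx hmem))
        (Submodule.mem_sup_right (Submodule.mem_span_singleton_self _))
    · refine sup_le ?_ ?_
      · rw [vectorSpan_def, Submodule.span_le]
        rintro _ ⟨x, hx, y, hy, rfl⟩
        exact sub_mem (Submodule.subset_span hx) (Submodule.subset_span hy)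
      · rw [Submodule.span_singleton_le_iff_mem]
        exact Submodule.subset_span hmem
  have hinf : vectorSpan ℝ (rho '' G.edgeSet) ⊓ Submodule.span ℝ {rho e} = ⊥ :=
    (Submodule.disjoint_span_singleton_of_notMem hnot).eq_bot
  have hne : rho e ≠ 0 := fun h => hnot (h ▸ zero_mem _)
  have hfin := Submodule.finrank_sup_add_finrank_inf_eq (vectorSpan ℝ (rho '' G.edgeSet))
    (Submodule.span ℝ {rho e})
  rw [hinf, finrank_bot, add_zero, finrank_span_singleton hne] at hfin
  rw [polyDim, hdir, hsup, hfin]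

open Classical in
/-- A lattice point in a suitable half-open parallelepiped bounds the degree from below. -/
theorem le_polyDeg_of_linearIndependent {G : SimpleGraph (Fin N)} {m : ℕ} [NeZero m]
    {E : Fin m → Sym2 (Fin N)} (hE : ∀ k, E k ∈ G.edgeSet)
    (hli : LinearIndependent ℝ fun k => rho (E k)) {S : Finset (Fin m)} {α β : Fin m → ℝ}
    (hα : ∀ k ∈ S, 0 < α k ∧ α k ≤ 1) (hα' : ∀ k ∉ S, 0 ≤ α k ∧ α k < 1) {z : Fin N → ℤ}
    (hz : ∀ i, (z i : ℝ) = ∑ k, α k * rho (E k) i) {s : ℕ} (hs : ∑ k, α k = s)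
    (hβ : ∀ k ∈ S, β k < 0) {F : Finset (Sym2 (Fin N))} (hF : ∀ f ∈ F, f ∈ G.edgeSet)
    (hFβ : ∀ i, ∑ f ∈ F, rho f i = ∑ k, β k * rho (E k) i) :
    s ≤ polyDeg (edgePolytope G) := by
  let e : Fin m → G.edgeSet := fun k => ⟨E k, hE k⟩
  have hliv : LinearIndependent ℝ fun k => edgeVec G (e k) :=
    LinearIndependent.of_comp (edgeSpan G).subtype hli
  have hinj : Function.Injective e := fun k l hkl => hliv.injective (by simp only [hkl])
  obtain ⟨B, hIB, hB⟩ := exists_isBase_of_linearIndepOn (span_range_edgeVec G)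
    ((linearIndepOn_range_iff hinj _).2 hliv)
  have heB : ∀ k, e k ∈ B := fun k => hIB ⟨k, rfl⟩
  have hcoord : ∀ (γ : Fin m → ℝ) (i : G.edgeSet), i ∈ B →
      baseCoord (edgeVec G) B i (∑ k, γ k • edgeVec G (e k)) = ∑ k, if i = e k then γ k else 0 := by
    intro γ i hi
    rw [map_sum]
    refine Finset.sum_congr rfl fun k _ => ?_
    rw [map_smul, hB.baseCoord_apply hi (heB k)]
    simp
  have hcoord_mem : ∀ (γ : Fin m → ℝ) (l : Fin m),
      baseCoord (edgeVec G) B (e l) (∑ k, γ k • edgeVec G (e k)) = γ l := by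
    intro γ l
    rw [hcoord γ _ (heB l)]
    simp [hinj.eq_iff]
  have hval : ∀ γ : Fin m → ℝ, ((∑ k, γ k • edgeVec G (e k) : edgeSpan G) : Fin N → ℝ) =
      fun i => ∑ k, γ k * rho (E k) i := by
    intro γ
    ext i
    simp [edgeVec, e, Finset.sum_apply]
  have hu : ∑ j, (if j.1 ∈ F then (1 : ℝ) else 0) • edgeVec G j = ∑ k, β k • edgeVec G (e k) := by
    apply Subtype.ext
    rw [coe_sum_edgeVec, hval]
    ext i
    rw [← hFβ, Finset.sum_apply]
    simp only [Pi.smul_apply, smul_eq_mul, ite_mul, one_mul, zero_mul]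
    rw [← Finset.sum_filter]
    refine Finset.sum_bij (fun j _ => j.1) (fun j hj => (Finset.mem_filter.1 hj).2)
      (fun j _ l _ h => Subtype.ext h)
      (fun f hf => ⟨⟨f, hF f hf⟩, by simpa using hf, rfl⟩) (fun _ _ => rfl)
  obtain ⟨h, hcount, hbdd, i, hki, hi⟩ := exists_hStar (S := S.image e)
    (x := ∑ k, α k • edgeVec G (e k)) (k := s) (edgeVec_mem_edgeLattice G)
    (edgeHeight_edgeVec G) (coneSlice_edgeVec_finite G) hB
    (a := fun j => if j.1 ∈ F then 1 else 0) (fun j => by split_ifs <;> norm_num)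
    (by
      intro j hj
      obtain ⟨k, hk, rfl⟩ := Finset.mem_image.1 hj
      rw [hu, hcoord_mem]
      exact hβ k hk)
    (mem_edgeLattice.2 ⟨z, by rw [hval]; exact funext hz⟩)
    (by simp [map_sum, edgeHeight_edgeVec, hs])
    (by
      intro j _ hj
      obtain ⟨k, hk, rfl⟩ := Finset.mem_image.1 hj
      rw [hcoord_mem]
      exact hα k hk)
    (by
      intro j hjB hj
      by_cases hje : ∃ k, j = e k
      · obtain ⟨k, rfl⟩ := hje
        rw [hcoord_mem]
        exact hα' k fun hk => hj (Finset.mem_image_of_mem _ hk)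
      · push Not at hje
        rw [hcoord _ _ hjB]
        simp [hje])
  have hdim := polyDim_add_one (hE 0)
  have hdelta : ∀ n, deltaCoeff (edgePolytope G) n = h n := fun n => by
    rw [deltaCoeff, hdim]
    exact sum_neg_one_pow_mul_choose_eq (hdim ▸ Nat.succ_pos _)
      (fun t => (ehr_edgePolytope G t).trans (hcount t)) n
  refine hki.trans (le_csSup ⟨Module.finrank ℝ (edgeSpan G), fun n hn => hbdd n ?_⟩ ?_)
  · rw [Set.mem_ofPred_eq, hdelta] at hn
    exact_mod_cast hn
  · rw [Set.mem_ofPred_eq, hdelta]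
    exact_mod_cast hi

end EdgePolytope

section Triangles

variable {N : ℕ} {G : SimpleGraph (Fin N)}

theorem rho_mk (a b i : Fin N) : rho s(a, b) i = if i = a ∨ i = b then 1 else 0 := by
  simp [rho]

/-- Six vertices carrying two vertex-disjoint triangles. -/
theorem three_le_polyDeg_of_disjoint_triangles {v : Fin 6 → Fin N} (hv : Function.Injective v)
    (h01 : G.Adj (v 0) (v 1)) (h02 : G.Adj (v 0) (v 2)) (h12 : G.Adj (v 1) (v 2))
    (h34 : G.Adj (v 3) (v 4)) (h35 : G.Adj (v 3) (v 5)) (h45 : G.Adj (v 4) (v 5)) :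
    3 ≤ polyDeg (edgePolytope G) := by
  classical
  refine le_polyDeg_of_linearIndependent (m := 6)
    (E := ![s(v 0, v 1), s(v 0, v 2), s(v 1, v 2), s(v 3, v 4), s(v 3, v 5), s(v 4, v 5)])
    (S := ∅) (α := fun _ => 1 / 2) (β := 0) (F := ∅)
    (z := fun i => if i ∈ Set.range v then 1 else 0) ?_ ?_ (by simp) (by norm_num) ?_ (by norm_num)
    (by simp) (by simp) (by simp)
  · intro k
    fin_cases k <;> simpa
  · refine Fintype.linearIndependent_iff.2 fun g hg => ?_
    have h := fun j => congrFun hg (v j)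
    have h0 := h 0
    have h1 := h 1
    have h2 := h 2
    have h3 := h 3
    have h4 := h 4
    have h5 := h 5
    simp [Fin.sum_univ_succ, rho_mk, hv.eq_iff] at h0 h1 h2 h3 h4 h5
    intro k
    fin_cases k <;> simp <;> linarith
  · intro i
    by_cases hi : i ∈ Set.range v
    · obtain ⟨j, rfl⟩ := hi
      fin_cases j <;> simp [Fin.sum_univ_succ, rho_mk, hv.eq_iff] <;> norm_num
    · have : ∀ j, i ≠ v j := fun j h => hi ⟨j, h.symm⟩
      simp [Fin.sum_univ_succ, rho_mk, this, hi]

/-- Three triangles with common vertex `v 0` and otherwise disjoint. -/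
theorem three_le_polyDeg_of_friendship {v : Fin 7 → Fin N} (hv : Function.Injective v)
    (h0 : ∀ j, j ≠ 0 → G.Adj (v 0) (v j))
    (h12 : G.Adj (v 1) (v 2)) (h34 : G.Adj (v 3) (v 4)) (h56 : G.Adj (v 5) (v 6)) :
    3 ≤ polyDeg (edgePolytope G) := by
  classical
  refine le_polyDeg_of_linearIndependent (m := 7)
    (E := ![s(v 1, v 2), s(v 3, v 4), s(v 5, v 6), s(v 0, v 2), s(v 0, v 4), s(v 0, v 5),
      s(v 0, v 6)])
    (S := {2, 3, 4}) (α := ![0, 0, 1, 1, 1, 0, 0]) (β := ![1, 1, -2, -1, -1, 2, 2])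
    (F := {s(v 0, v 1), s(v 0, v 3)})
    (z := fun i => (if i = v 5 ∨ i = v 6 then 1 else 0) + (if i = v 0 ∨ i = v 2 then 1 else 0) +
      (if i = v 0 ∨ i = v 4 then 1 else 0)) ?_ ?_ ?_ ?_ ?_ ?_ ?_ ?_ ?_
  · intro k
    fin_cases k <;> simp [h12, h34, h56, h0]
  · refine Fintype.linearIndependent_iff.2 fun g hg => ?_
    have h := fun j => congrFun hg (v j)
    have e0 := h 0
    have e1 := h 1
    have e2 := h 2
    have e3 := h 3
    have e4 := h 4
    have e5 := h 5
    have e6 := h 6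
    simp [Fin.sum_univ_succ, rho_mk, hv.eq_iff] at e0 e1 e2 e3 e4 e5 e6
    intro k
    fin_cases k <;> simp <;> linarith
  · intro k hk
    fin_cases k <;> simp_all
  · intro k hk
    fin_cases k <;> simp_all
  · intro i
    simp [Fin.sum_univ_succ, rho_mk]
    ring
  · simp [Fin.sum_univ_succ]
    norm_num
  · intro k hk
    fin_cases k <;> simp_all
  · intro f hf
    simp only [Finset.mem_insert, Finset.mem_singleton] at hf
    rcases hf with rfl | rfl <;> exact h0 _ (by decide)
  · intro i
    rw [Finset.sum_pair (by simp [hv.eq_iff])]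
    by_cases hi : i ∈ Set.range v
    · obtain ⟨j, rfl⟩ := hi
      fin_cases j <;> simp [Fin.sum_univ_succ, rho_mk, hv.eq_iff]
      norm_num
    · have : ∀ j, i ≠ v j := fun j h => hi ⟨j, h.symm⟩
      simp [Fin.sum_univ_succ, rho_mk, this]

theorem exists_isCycle_length_four {V : Type*} {G : SimpleGraph V} {a b c d : V} (hab : G.Adj a b)
    (hbc : G.Adj b c) (hcd : G.Adj c d) (hda : G.Adj d a) (hac : a ≠ c) (hbd : b ≠ d) :
    ∃ (v : V) (w : G.Walk v v), w.IsCycle ∧ w.length = 4 := by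
  refine ⟨a, .cons hab (.cons hbc (.cons hcd (.cons hda .nil))), ?_, rfl⟩
  have h1 := hab.ne
  have h2 := hbc.ne
  have h3 := hcd.ne
  have h4 := hda.ne
  simp [SimpleGraph.Walk.isCycle_def, SimpleGraph.Walk.isTrail_def]
  grind

theorem exists_eq_of_isNClique_three {V : Type*} [DecidableEq V] {G : SimpleGraph V}
    {T : Finset V} (hT : G.IsNClique 3 T) {x : V} (hx : x ∈ T) :
    ∃ y z, G.Adj x y ∧ G.Adj x z ∧ G.Adj y z ∧ T = {x, y, z} := by
  obtain ⟨a, b, c, hab, hac, hbc, rfl⟩ := SimpleGraph.is3Clique_iff.1 hT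
  simp only [Finset.mem_insert, Finset.mem_singleton] at hx
  rcases hx with rfl | rfl | rfl
  · exact ⟨b, c, hab, hac, hbc, rfl⟩
  · exact ⟨a, c, hab.symm, hbc, hac, by grind⟩
  · exact ⟨a, b, hac.symm, hbc.symm, hab, by grind⟩

theorem exists_eq_of_isNClique_three_of_ne {V : Type*} [DecidableEq V] {G : SimpleGraph V}
    {T : Finset V} (hT : G.IsNClique 3 T) {x y : V} (hx : x ∈ T) (hy : y ∈ T) (hxy : x ≠ y) :
    ∃ z, G.Adj x y ∧ G.Adj x z ∧ G.Adj y z ∧ T = {x, y, z} := by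
  obtain ⟨a, b, hxa, hxb, hab, rfl⟩ := exists_eq_of_isNClique_three hT hx
  simp only [Finset.mem_insert, Finset.mem_singleton] at hy
  rcases hy with rfl | rfl | rfl
  · exact absurd rfl hxy
  · exact ⟨b, hxa, hxb, hab, rfl⟩
  · exact ⟨a, hxb, hxa, hab.symm, by grind⟩

theorem eq_of_isNClique_three_of_ne {V : Type*} {G : SimpleGraph V}
    (h4 : ¬ ∃ (v : V) (w : G.Walk v v), w.IsCycle ∧ w.length = 4) {T T' : Finset V}
    (hT : G.IsNClique 3 T) (hT' : G.IsNClique 3 T') (hne : T ≠ T') {x y : V} (hx : x ∈ T)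
    (hx' : x ∈ T') (hy : y ∈ T) (hy' : y ∈ T') : x = y := by
  classical
  by_contra hxy
  obtain ⟨z, -, hxz, hyz, rfl⟩ := exists_eq_of_isNClique_three_of_ne hT hx hy hxy
  obtain ⟨w, -, hxw, hyw, rfl⟩ := exists_eq_of_isNClique_three_of_ne hT' hx' hy' hxy
  refine h4 (exists_isCycle_length_four hxz hyz.symm hyw hxw.symm hxy ?_)
  rintro rfl
  exact hne rfl

theorem three_le_polyDeg_of_disjoint {T T' : Finset (Fin N)} (hT : G.IsNClique 3 T)
    (hT' : G.IsNClique 3 T') (hd : Disjoint T T') : 3 ≤ polyDeg (edgePolytope G) := by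
  obtain ⟨a, b, c, hab, hac, hbc, rfl⟩ := SimpleGraph.is3Clique_iff.1 hT
  obtain ⟨d, e, f, hde, hdf, hef, rfl⟩ := SimpleGraph.is3Clique_iff.1 hT'
  refine three_le_polyDeg_of_disjoint_triangles (v := ![a, b, c, d, e, f]) ?_ hab hac hbc hde hdf
    hef
  have := hab.ne
  have := hac.ne
  have := hbc.ne
  have := hde.ne
  have := hdf.ne
  have := hef.ne
  simp only [Finset.disjoint_insert_left, Finset.disjoint_singleton_left, Finset.mem_insert,
    Finset.mem_singleton, not_or] at hd
  rw [← List.nodup_ofFn]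
  simp only [List.ofFn_succ, List.ofFn_zero]
  simp_all

end Triangles

/-- If a finite connected simple graph `G` has at least three
`3`-cycles (three distinct triangles) and no `4`-cycle, then `deg(P_G) ≥ 3`. -/
theorem polyDeg_ge_three_of_three_triangles
    {N : ℕ} (G : SimpleGraph (Fin N)) (hG : G.Connected)
    (T₁ T₂ T₃ : Finset (Fin N))
    (h₁ : G.IsNClique 3 T₁) (h₂ : G.IsNClique 3 T₂) (h₃ : G.IsNClique 3 T₃)
    (h12 : T₁ ≠ T₂) (h13 : T₁ ≠ T₃) (h23 : T₂ ≠ T₃)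
    (h4 : ¬ ∃ (v : Fin N) (w : G.Walk v v), w.IsCycle ∧ w.length = 4) :
    3 ≤ polyDeg (edgePolytope G) := by
  by_contra hlt
  have hmeet : ∀ {T T' : Finset (Fin N)}, G.IsNClique 3 T → G.IsNClique 3 T' →
      ∃ x, x ∈ T ∧ x ∈ T' := fun hT hT' =>
    Finset.not_disjoint_iff.1 fun hd => hlt (three_le_polyDeg_of_disjoint hT hT' hd)
  obtain ⟨x, hx₁, hx₂⟩ := hmeet h₁ h₂
  have H12 := fun {u} => eq_of_isNClique_three_of_ne h4 h₁ h₂ h12 hx₁ hx₂ (y := u)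
  by_cases hx₃ : x ∈ T₃
  · have H13 := fun {u} => eq_of_isNClique_three_of_ne h4 h₁ h₃ h13 hx₁ hx₃ (y := u)
    have H23 := fun {u} => eq_of_isNClique_three_of_ne h4 h₂ h₃ h23 hx₂ hx₃ (y := u)
    obtain ⟨a, b, hxa, hxb, hab, rfl⟩ := exists_eq_of_isNClique_three h₁ hx₁
    obtain ⟨c, d, hxc, hxd, hcd, rfl⟩ := exists_eq_of_isNClique_three h₂ hx₂
    obtain ⟨e, f, hxe, hxf, hef, rfl⟩ := exists_eq_of_isNClique_three h₃ hx₃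
    refine hlt (three_le_polyDeg_of_friendship (v := ![x, a, b, c, d, e, f]) ?_ ?_ hab hcd hef)
    · have := hxa.ne
      have := hxb.ne
      have := hxc.ne
      have := hxd.ne
      have := hxe.ne
      have := hxf.ne
      have := hab.ne
      have := hcd.ne
      have := hef.ne
      have := @H12 a
      have := @H12 b
      have := @H13 a
      have := @H13 b
      have := @H23 c
      have := @H23 d
      clear H12 H13 H23 h12 h13 h23 hmeet
      simp only [Finset.mem_insert, Finset.mem_singleton] at *
      rw [← List.nodup_ofFn]
      simp only [List.ofFn_succ, List.ofFn_zero]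
      simp
      grind
    · intro j hj
      fin_cases j
      exacts [absurd rfl hj, hxa, hxb, hxc, hxd, hxe, hxf]
  · obtain ⟨y, hy₁, hy₃⟩ := hmeet h₁ h₃
    obtain ⟨w, hw₂, hw₃⟩ := hmeet h₂ h₃
    have hxy : x ≠ y := fun h => hx₃ (h ▸ hy₃)
    have hxw : x ≠ w := fun h => hx₃ (h ▸ hw₃)
    have hyw : y ≠ w := fun h => hxy (H12 hy₁ (h ▸ hw₂))
    obtain ⟨c, -, hyc, hwc, rfl⟩ := exists_eq_of_isNClique_three_of_ne h₃ hy₃ hw₃ hyw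
    exact h4 (exists_isCycle_length_four (h₁.isClique hx₁ hy₁ hxy) hyc hwc.symm
      (h₂.isClique hw₂ hx₂ hxw.symm) (fun h => hx₃ (by simp [h])) hyw)
end

section
/- Let G be a finite simple graph with no cycle of length 4, and let C_1, C_2, C_3 be three distinct 3-cycles of G such that V(C_i) ∩ V(C_j) ≠ ∅ for all 1 ≤ i < j ≤ 3. Then E(C_i) ∩ E(C_j) = ∅ for i ≠ j and there is a single vertex common to all three cycles, i.e., V(C_1) ∩ V(C_2) ∩ V(C_3) ≠ ∅; in other words C_1 ∪ C_2 ∪ C_3 is the friendship graph consisting of three triangles glued at one common vertex. -/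
namespace SimpleGraph

variable {V : Type*} {G : SimpleGraph V}

/-- In a graph without `4`-cycles, two distinct vertices have at most one common neighbour. -/
theorem eq_of_common_neighbors_of_no_four_cycle
    (h4 : ¬ ∃ (v : V) (w : G.Walk v v), w.IsCycle ∧ w.length = 4) {x y z w : V}
    (hxy : x ≠ y) (hxz : G.Adj x z) (hyz : G.Adj y z) (hxw : G.Adj x w) (hyw : G.Adj y w) :
    z = w := by
  by_contra hzw
  refine h4 ⟨x, .cons hxz (.cons hyz.symm (.cons hyw (.cons hxw.symm .nil))), ?_, rfl⟩
  have := hxz.ne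
  have := hyz.ne
  have := hxw.ne
  have := hyw.ne
  simp only [Walk.cons_isCycle_iff, Walk.cons_isPath_iff, Walk.isPath_iff_nil,
    Walk.nil_nil, Walk.support_cons, Walk.support_nil, Walk.edges_cons, Walk.edges_nil, List.mem_cons,
    List.not_mem_nil, Sym2.eq_iff]
  grind

/-- Two distinct vertices of a triangle are adjacent, and the triangle consists of them together
with a common neighbour. -/
theorem exists_third_vertex_of_triangle {a b c x y : V}
    (hT : G.Adj a b ∧ G.Adj b c ∧ G.Adj a c)
    (hx : x ∈ ({a, b, c} : Set V)) (hy : y ∈ ({a, b, c} : Set V)) (hxy : x ≠ y) :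
    G.Adj x y ∧ ∃ z, G.Adj x z ∧ G.Adj y z ∧ ({a, b, c} : Set V) = {x, y, z} := by
  obtain ⟨hab, hbc, hac⟩ := hT
  simp only [Set.mem_insert_iff, Set.mem_singleton_iff] at hx hy
  have key : ∃ z, (z = a ∨ z = b ∨ z = c) ∧ z ≠ x ∧ z ≠ y := by
    have := hab.ne
    have := hbc.ne
    have := hac.ne
    by_contra! h
    have := h a
    have := h b
    have := h c
    grind
  have adj : ∀ u v, (u = a ∨ u = b ∨ u = c) → (v = a ∨ v = b ∨ v = c) → u ≠ v → G.Adj u v := by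
    rintro u v (rfl | rfl | rfl) (rfl | rfl | rfl) h <;>
      first | exact absurd rfl h | assumption | (apply Adj.symm; assumption)
  obtain ⟨z, hz, hzx, hzy⟩ := key
  refine ⟨adj x y hx hy hxy, z, adj x z hx hz hzx.symm, adj y z hy hz hzy.symm, ?_⟩
  ext t
  simp only [Set.mem_insert_iff, Set.mem_singleton_iff]
  grind

/-- In a graph without `4`-cycles, triangles with two common vertices coincide. -/
theorem triangle_eq_of_two_common_vertices
    (h4 : ¬ ∃ (v : V) (w : G.Walk v v), w.IsCycle ∧ w.length = 4) {a b c a' b' c' x y : V}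
    (hT : G.Adj a b ∧ G.Adj b c ∧ G.Adj a c) (hT' : G.Adj a' b' ∧ G.Adj b' c' ∧ G.Adj a' c')
    (hxy : x ≠ y) (hx : x ∈ ({a, b, c} : Set V)) (hy : y ∈ ({a, b, c} : Set V))
    (hx' : x ∈ ({a', b', c'} : Set V)) (hy' : y ∈ ({a', b', c'} : Set V)) :
    ({a, b, c} : Set V) = {a', b', c'} := by
  obtain ⟨-, z, hxz, hyz, h⟩ := exists_third_vertex_of_triangle hT hx hy hxy
  obtain ⟨-, w, hxw, hyw, h'⟩ := exists_third_vertex_of_triangle hT' hx' hy' hxy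
  rw [h, h', eq_of_common_neighbors_of_no_four_cycle h4 hxy hxz hyz hxw hyw]

/-- In a graph without `4`-cycles, distinct triangles are edge-disjoint. -/
theorem disjoint_edges_of_triangle_ne
    (h4 : ¬ ∃ (v : V) (w : G.Walk v v), w.IsCycle ∧ w.length = 4) {a b c a' b' c' : V}
    (hT : G.Adj a b ∧ G.Adj b c ∧ G.Adj a c) (hT' : G.Adj a' b' ∧ G.Adj b' c' ∧ G.Adj a' c')
    (hne : ({a, b, c} : Set V) ≠ {a', b', c'}) :
    Disjoint ({s(a, b), s(b, c), s(a, c)} : Set (Sym2 V)) {s(a', b'), s(b', c'), s(a', c')} := by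
  have ends : ∀ {p q r x y : V}, s(x, y) ∈ ({s(p, q), s(q, r), s(p, r)} : Set (Sym2 V)) →
      x ∈ ({p, q, r} : Set V) ∧ y ∈ ({p, q, r} : Set V) := by
    intro p q r x y h
    simp only [Set.mem_insert_iff, Set.mem_singleton_iff, Sym2.eq_iff] at h ⊢
    grind
  rw [Set.disjoint_left]
  intro e he he'
  induction e with | _ x y
  have hadj : G.Adj x y := by
    rw [← mem_edgeSet]
    rcases he with h | h | h <;> rw [h]
    exacts [hT.1, hT.2.1, hT.2.2]
  exact hne (triangle_eq_of_two_common_vertices h4 hT hT' hadj.ne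
    (ends he).1 (ends he).2 (ends he').1 (ends he').2)

end SimpleGraph

/-- Let `G` be a finite simple graph with no `4`-cycle and let
`C₁, C₂, C₃` be three distinct `3`-cycles (triangles, given by their vertices
`aᵢ, bᵢ, cᵢ`) such that any two of them share a vertex.  Then their edge sets are
pairwise disjoint and all three triangles share a common vertex, i.e.
`C₁ ∪ C₂ ∪ C₃` is the friendship graph of three triangles glued at one vertex. -/
theorem three_triangles_pairwise_meeting
    {V : Type*} [Fintype V] (G : SimpleGraph V)
    (h4 : ¬ ∃ (v : V) (w : G.Walk v v), w.IsCycle ∧ w.length = 4)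
    (a₁ b₁ c₁ a₂ b₂ c₂ a₃ b₃ c₃ : V)
    (hT₁ : G.Adj a₁ b₁ ∧ G.Adj b₁ c₁ ∧ G.Adj a₁ c₁)
    (hT₂ : G.Adj a₂ b₂ ∧ G.Adj b₂ c₂ ∧ G.Adj a₂ c₂)
    (hT₃ : G.Adj a₃ b₃ ∧ G.Adj b₃ c₃ ∧ G.Adj a₃ c₃)
    (hne12 : ({a₁, b₁, c₁} : Set V) ≠ {a₂, b₂, c₂})
    (hne13 : ({a₁, b₁, c₁} : Set V) ≠ {a₃, b₃, c₃})
    (hne23 : ({a₂, b₂, c₂} : Set V) ≠ {a₃, b₃, c₃})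
    (hi12 : (({a₁, b₁, c₁} : Set V) ∩ {a₂, b₂, c₂}).Nonempty)
    (hi13 : (({a₁, b₁, c₁} : Set V) ∩ {a₃, b₃, c₃}).Nonempty)
    (hi23 : (({a₂, b₂, c₂} : Set V) ∩ {a₃, b₃, c₃}).Nonempty) :
    Disjoint ({s(a₁, b₁), s(b₁, c₁), s(a₁, c₁)} : Set (Sym2 V))
        {s(a₂, b₂), s(b₂, c₂), s(a₂, c₂)} ∧
    Disjoint ({s(a₁, b₁), s(b₁, c₁), s(a₁, c₁)} : Set (Sym2 V))
        {s(a₃, b₃), s(b₃, c₃), s(a₃, c₃)} ∧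
    Disjoint ({s(a₂, b₂), s(b₂, c₂), s(a₂, c₂)} : Set (Sym2 V))
        {s(a₃, b₃), s(b₃, c₃), s(a₃, c₃)} ∧
    (({a₁, b₁, c₁} : Set V) ∩ {a₂, b₂, c₂} ∩ {a₃, b₃, c₃}).Nonempty := by
  refine ⟨SimpleGraph.disjoint_edges_of_triangle_ne h4 hT₁ hT₂ hne12,
    SimpleGraph.disjoint_edges_of_triangle_ne h4 hT₁ hT₃ hne13,
    SimpleGraph.disjoint_edges_of_triangle_ne h4 hT₂ hT₃ hne23, ?_⟩
  obtain ⟨p, hp₁, hp₂⟩ := hi12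
  obtain ⟨q, hq₁, hq₃⟩ := hi13
  obtain ⟨r, hr₂, hr₃⟩ := hi23
  by_cases hpq : p = q
  · exact ⟨p, ⟨hp₁, hp₂⟩, hpq ▸ hq₃⟩
  by_cases hpr : p = r
  · exact ⟨p, ⟨hp₁, hp₂⟩, hpr ▸ hr₃⟩
  by_cases hqr : q = r
  · exact ⟨q, ⟨hq₁, hqr ▸ hr₂⟩, hq₃⟩
  obtain ⟨-, z, hpz, hqz, hz⟩ := SimpleGraph.exists_third_vertex_of_triangle hT₁ hp₁ hq₁ hpq
  have hzr : z = r := SimpleGraph.eq_of_common_neighbors_of_no_four_cycle h4 hpq hpz hqz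
    (SimpleGraph.exists_third_vertex_of_triangle hT₂ hp₂ hr₂ hpr).1
    (SimpleGraph.exists_third_vertex_of_triangle hT₃ hq₃ hr₃ hqr).1
  exact ⟨r, ⟨by simp [hz, hzr], hr₂⟩, hr₃⟩
end

section
/- Let F be the friendship graph on 7 vertices consisting of three triangles sharing exactly one common vertex (so F has 9 edges). Then deg(P_F) = 3, where P_F ⊂ R^7 is the edge polytope of F. -/
open MvPolynomial Pointwise

/-- The generating function counting the elements of `α` by weight. -/
noncomputable def weightSeries {α : Type*} (w : α → ℕ) : PowerSeries ℤ :=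
  PowerSeries.mk fun n => (Nat.card {a // w a = n} : ℤ)

/-- Pairs of total weight `n`, split according to the weights of the components. -/
def weightFiberProdEquiv {α β : Type*} (w : α → ℕ) (u : β → ℕ) (n : ℕ) :
    {p : α × β // w p.1 + u p.2 = n} ≃
      Σ k : Finset.HasAntidiagonal.antidiagonal n, {a // w a = k.1.1} × {b // u b = k.1.2} where
  toFun p := ⟨⟨(w p.1.1, u p.1.2), by simpa using p.2⟩, ⟨p.1.1, rfl⟩, ⟨p.1.2, rfl⟩⟩
  invFun s := ⟨(s.2.1.1, s.2.2.1), by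
    rw [s.2.1.2, s.2.2.2, Finset.HasAntidiagonal.mem_antidiagonal.mp s.1.2]⟩
  left_inv p := rfl
  right_inv := by
    rintro ⟨⟨⟨i, j⟩, h⟩, ⟨a, ha⟩, ⟨b, hb⟩⟩
    dsimp only at ha hb
    subst ha hb
    rfl

theorem finite_weightFiber_prod {α β : Type*} {w : α → ℕ} {u : β → ℕ}
    (hw : ∀ n, Finite {a // w a = n}) (hu : ∀ n, Finite {b // u b = n}) (n : ℕ) :
    Finite {p : α × β // w p.1 + u p.2 = n} :=
  Finite.of_equiv _ (weightFiberProdEquiv w u n).symm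

theorem weightSeries_prod {α β : Type*} {w : α → ℕ} {u : β → ℕ}
    (hw : ∀ n, Finite {a // w a = n}) (hu : ∀ n, Finite {b // u b = n}) :
    weightSeries (fun p : α × β => w p.1 + u p.2) = weightSeries w * weightSeries u := by
  ext n
  rw [PowerSeries.coeff_mul]
  simp only [weightSeries, PowerSeries.coeff_mk]
  rw [Nat.card_congr (weightFiberProdEquiv w u n), Nat.card_sigma]
  simp only [Nat.card_prod]
  push_cast
  exact Finset.sum_coe_sort (Finset.HasAntidiagonal.antidiagonal n)
    fun k => (Nat.card {a // w a = k.1} : ℤ) * Nat.card {b // u b = k.2}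

theorem finite_weightFiber_id (n : ℕ) : Finite {m : ℕ // id m = n} :=
  inferInstanceAs (Finite {m : ℕ // m = n})

theorem weightSeries_id_mul_one_sub_X :
    weightSeries (id : ℕ → ℕ) * (1 - PowerSeries.X) = 1 := by
  have h : weightSeries (id : ℕ → ℕ) = PowerSeries.mk 1 := by
    ext n
    simp [weightSeries]
  rw [h, PowerSeries.mk_one_mul_one_sub_eq_one]

theorem weightFiber_max_eq (n : ℕ) :
    {p : ℕ × ℕ | max p.1 p.2 = n} =
      ((Finset.range n ×ˢ {n}) ∪ ({n} ×ˢ Finset.range (n + 1)) : Finset (ℕ × ℕ)) := by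
  ext ⟨a, b⟩
  simp
  omega

theorem finite_weightFiber_max (n : ℕ) : Finite {p : ℕ × ℕ // max p.1 p.2 = n} := by
  change Finite ↥{p : ℕ × ℕ | max p.1 p.2 = n}
  rw [weightFiber_max_eq]
  infer_instance

theorem card_weightFiber_max (n : ℕ) :
    Nat.card {p : ℕ × ℕ // max p.1 p.2 = n} = 2 * n + 1 := by
  change Nat.card ↥{p : ℕ × ℕ | max p.1 p.2 = n} = _
  rw [weightFiber_max_eq, Nat.card_coe_set_eq, Set.ncard_coe_finset,
    Finset.card_union_of_disjoint]
  · simp; omega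
  · rw [Finset.disjoint_left]
    rintro ⟨a, b⟩
    simp
    omega

theorem weightSeries_max_mul_one_sub_X_sq :
    weightSeries (fun p : ℕ × ℕ => max p.1 p.2) * (1 - PowerSeries.X) ^ 2 =
      1 + PowerSeries.X := by
  have h : weightSeries (fun p : ℕ × ℕ => max p.1 p.2) * (1 - PowerSeries.X) =
      (1 + PowerSeries.X) * PowerSeries.mk 1 := by
    ext n
    rw [mul_sub, add_mul, mul_one, one_mul, map_sub, map_add]
    cases n with
    | zero => simp [weightSeries, card_weightFiber_max]
    | succ n =>
      rw [PowerSeries.coeff_succ_mul_X, PowerSeries.coeff_succ_X_mul]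
      simp [weightSeries, card_weightFiber_max]
      ring
  rw [pow_two, ← mul_assoc, h, mul_assoc, PowerSeries.mk_one_mul_one_sub_eq_one, mul_one]

theorem coeff_one_sub_X_pow (d j : ℕ) :
    PowerSeries.coeff j ((1 - PowerSeries.X : PowerSeries ℤ) ^ d) =
      (-1) ^ j * (d.choose j : ℤ) := by
  have h : (1 - PowerSeries.X : PowerSeries ℤ) ^ d =
      PowerSeries.rescale (-1 : ℤ) (((1 + Polynomial.X) ^ d : Polynomial ℤ) : PowerSeries ℤ) := by
    simp [PowerSeries.rescale_X, sub_eq_add_neg]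
  rw [h, PowerSeries.coeff_rescale, Polynomial.coeff_coe, Polynomial.coeff_one_add_X_pow]

theorem deltaCoeff_eq_coeff {N : ℕ} (P : Set (Fin N → ℝ)) (i : ℕ) :
    deltaCoeff P i = PowerSeries.coeff i
      ((1 - PowerSeries.X) ^ (polyDim P + 1) * PowerSeries.mk fun t => (ehr P t : ℤ)) := by
  rw [PowerSeries.coeff_mul, Finset.Nat.sum_antidiagonal_eq_sum_range_succ_mk, deltaCoeff]
  simp only [coeff_one_sub_X_pow, PowerSeries.coeff_mk]

theorem mk_card_weight_le_mul_one_sub_X {α : Type*} {w : α → ℕ}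
    (hw : ∀ n, Finite {a // w a = n}) :
    (PowerSeries.mk fun n => (Nat.card {a // w a ≤ n} : ℤ)) * (1 - PowerSeries.X) =
      weightSeries w := by
  have h : (PowerSeries.mk fun n => (Nat.card {a // w a ≤ n} : ℤ)) =
      weightSeries w * weightSeries (id : ℕ → ℕ) := by
    rw [← weightSeries_prod hw finite_weightFiber_id]
    ext n
    rw [weightSeries, PowerSeries.coeff_mk, PowerSeries.coeff_mk]
    congr 1
    refine Nat.card_congr
      { toFun := fun a => ⟨(a.1, n - w a.1), Nat.add_sub_of_le a.2⟩
        invFun := fun q => ⟨q.1.1, (Nat.le_add_right _ _).trans_eq q.2⟩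
        left_inv := fun a => rfl
        right_inv := ?_ }
    rintro ⟨⟨a, k⟩, rfl⟩
    simp
  rw [h, mul_assoc, weightSeries_id_mul_one_sub_X, mul_one]

theorem finite_weight_le {α : Type*} {w : α → ℕ} (hw : ∀ n, Finite {a // w a = n}) (n : ℕ) :
    Finite {a // w a ≤ n} := by
  have : {a | w a ≤ n} = ⋃ k ∈ Finset.range (n + 1), {a | w a = k} := by
    ext a
    simp
  change Finite ↥{a | w a ≤ n}
  rw [this]
  exact (Set.Finite.biUnion (Finset.finite_toSet _) fun k _ => hw k).to_subtype

/-- Three pairs of natural numbers: the coordinates of a lattice point at the six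
non-central vertices of the friendship graph, grouped by triangle. -/
abbrev TrianglePairs : Type := (ℕ × ℕ) × (ℕ × ℕ) × (ℕ × ℕ)

/-- The sum of the maxima of the three pairs. -/
def sumMax (p : TrianglePairs) : ℕ :=
  max p.1.1 p.1.2 + (max p.2.1.1 p.2.1.2 + max p.2.2.1 p.2.2.2)

/-- The sum of all six entries. -/
def sumAll (p : TrianglePairs) : ℕ :=
  (p.1.1 + p.1.2) + ((p.2.1.1 + p.2.1.2) + (p.2.2.1 + p.2.2.2))

theorem sumMax_le_sumAll (p : TrianglePairs) : sumMax p ≤ sumAll p := by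
  unfold sumMax sumAll
  omega

theorem sumAll_le_two_mul_sumMax (p : TrianglePairs) : sumAll p ≤ 2 * sumMax p := by
  unfold sumMax sumAll
  omega

theorem finite_sumMax_fiber (n : ℕ) : Finite {p // sumMax p = n} :=
  finite_weightFiber_prod finite_weightFiber_max
    (finite_weightFiber_prod finite_weightFiber_max finite_weightFiber_max) n

theorem finite_sumAll_fiber (n : ℕ) : Finite {p // sumAll p = n} :=
  have h := finite_weightFiber_prod finite_weightFiber_id finite_weightFiber_id
  finite_weightFiber_prod h (finite_weightFiber_prod h h) n

theorem mk_card_sumMax_le_mul :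
    (PowerSeries.mk fun n => (Nat.card {p // sumMax p ≤ n} : ℤ)) * (1 - PowerSeries.X) ^ 7 =
      (1 + PowerSeries.X) ^ 3 := by
  have h : weightSeries sumMax = weightSeries (fun p : ℕ × ℕ => max p.1 p.2) ^ 3 := by
    rw [pow_three, ← weightSeries_prod finite_weightFiber_max finite_weightFiber_max,
      ← weightSeries_prod finite_weightFiber_max
        (finite_weightFiber_prod finite_weightFiber_max finite_weightFiber_max)]
    rfl
  rw [pow_succ', ← mul_assoc, mk_card_weight_le_mul_one_sub_X finite_sumMax_fiber, h,
    ← weightSeries_max_mul_one_sub_X_sq]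
  ring

theorem mk_card_sumAll_lt_mul :
    (PowerSeries.mk fun n => (Nat.card {p // sumAll p < n} : ℤ)) * (1 - PowerSeries.X) ^ 7 =
      PowerSeries.X := by
  have hfin := finite_weightFiber_prod finite_weightFiber_id finite_weightFiber_id
  have h : weightSeries sumAll = weightSeries (id : ℕ → ℕ) ^ 6 := by
    rw [show 6 = 2 * 3 from rfl, pow_mul, pow_three, pow_two,
      ← weightSeries_prod finite_weightFiber_id finite_weightFiber_id,
      ← weightSeries_prod hfin hfin,
      ← weightSeries_prod hfin (finite_weightFiber_prod hfin hfin)]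
    rfl
  have hX : (PowerSeries.mk fun n => (Nat.card {p // sumAll p < n} : ℤ)) =
      PowerSeries.X * PowerSeries.mk fun n => (Nat.card {p // sumAll p ≤ n} : ℤ) := by
    ext n
    cases n with
    | zero => simp
    | succ n => simp [PowerSeries.coeff_succ_X_mul]
  rw [hX, pow_succ', mul_assoc, ← mul_assoc _ (1 - PowerSeries.X),
    mk_card_weight_le_mul_one_sub_X finite_sumAll_fiber, h, ← mul_pow,
    weightSeries_id_mul_one_sub_X, one_pow, mul_one]

theorem card_sumMax_le (t : ℕ) :
    Nat.card {p // sumMax p ≤ t} =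
      Nat.card {p // sumMax p ≤ t ∧ t ≤ sumAll p} + Nat.card {p // sumAll p < t} := by
  have hM : Set.Finite {p | sumMax p ≤ t} := finite_weight_le finite_sumMax_fiber t
  have hunion : {p | sumMax p ≤ t} = {p | sumMax p ≤ t ∧ t ≤ sumAll p} ∪ {p | sumAll p < t} := by
    ext p
    have := sumMax_le_sumAll p
    simp only [Set.mem_ofPred_eq, Set.mem_union]
    omega
  have hdisj : Disjoint {p | sumMax p ≤ t ∧ t ≤ sumAll p} {p | sumAll p < t} := by
    rw [Set.disjoint_left]
    rintro p ⟨-, h⟩ h'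
    exact absurd h' (not_lt.mpr h)
  have h := congrArg Set.ncard hunion
  rw [Set.ncard_union_eq hdisj (hM.subset fun p hp => hp.1)
    (hM.subset fun p hp => (sumMax_le_sumAll p).trans (le_of_lt hp))] at h
  exact h

/-- The edge set of the friendship graph with triangles `{0,1,2}`, `{0,3,4}`, `{0,5,6}`. -/
def friendshipEdges : Set (Sym2 (Fin 7)) :=
  {s((0 : Fin 7), 1), s((0 : Fin 7), 2), s((1 : Fin 7), 2),
    s((0 : Fin 7), 3), s((0 : Fin 7), 4), s((3 : Fin 7), 4),
    s((0 : Fin 7), 5), s((0 : Fin 7), 6), s((5 : Fin 7), 6)}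

/-- The inequalities cutting out the `t`-th dilation of the edge polytope of the friendship
graph. -/
def FriendshipIneq (t : ℝ) (y : Fin 7 → ℝ) : Prop :=
  (∀ i, 0 ≤ y i) ∧ ∑ i, y i = 2 * t ∧
    max (y 1) (y 2) + (max (y 3) (y 4) + max (y 5) (y 6)) ≤ t ∧
    t ≤ (y 1 + y 2) + ((y 3 + y 4) + (y 5 + y 6))

theorem convex_friendshipIneq (t : ℝ) : Convex ℝ {y | FriendshipIneq t y} := by
  rintro x ⟨hx0, hxs, hxm, hxt⟩ y ⟨hy0, hys, hym, hyt⟩ a b ha hb hab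
  have hmax (i j : Fin 7) : max ((a • x + b • y) i) ((a • x + b • y) j) ≤
      a * max (x i) (x j) + b * max (y i) (y j) := by
    refine max_le ?_ ?_ <;> simp only [Pi.add_apply, Pi.smul_apply, smul_eq_mul] <;> gcongr <;>
      simp
  have ht : t = a * t + b * t := by rw [← add_mul, hab, one_mul]
  refine ⟨fun i => ?_, ?_, ?_, ?_⟩
  · have := mul_nonneg ha (hx0 i)
    have := mul_nonneg hb (hy0 i)
    simp only [Pi.add_apply, Pi.smul_apply, smul_eq_mul]
    positivity
  · simp only [Pi.add_apply, Pi.smul_apply, smul_eq_mul, Finset.sum_add_distrib,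
      ← Finset.mul_sum, hxs, hys]
    linear_combination (-2) * ht
  · have := mul_le_mul_of_nonneg_left hxm ha
    have := mul_le_mul_of_nonneg_left hym hb
    linarith [hmax 1 2, hmax 3 4, hmax 5 6]
  · have := mul_le_mul_of_nonneg_left hxt ha
    have := mul_le_mul_of_nonneg_left hyt hb
    simp only [Pi.add_apply, Pi.smul_apply, smul_eq_mul]
    linarith

theorem exists_split_le {m₁ m₂ m₃ r : ℝ} (h₁ : 0 ≤ m₁) (h₂ : 0 ≤ m₂) (h₃ : 0 ≤ m₃) (hr : 0 ≤ r)
    (hle : r ≤ m₁ + (m₂ + m₃)) :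
    ∃ r₁ r₂ r₃ : ℝ, (0 ≤ r₁ ∧ r₁ ≤ m₁) ∧ (0 ≤ r₂ ∧ r₂ ≤ m₂) ∧ (0 ≤ r₃ ∧ r₃ ≤ m₃) ∧
      r₁ + (r₂ + r₃) = r := by
  rcases le_total r m₁ with h | h
  · exact ⟨r, 0, 0, ⟨hr, h⟩, ⟨le_rfl, h₂⟩, ⟨le_rfl, h₃⟩, by ring⟩
  rcases le_total r (m₁ + m₂) with h' | h'
  · exact ⟨m₁, r - m₁, 0, ⟨h₁, le_rfl⟩, ⟨by linarith, by linarith⟩, ⟨le_rfl, h₃⟩, by ring⟩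
  · exact ⟨m₁, m₂, r - m₁ - m₂, ⟨h₁, le_rfl⟩, ⟨h₂, le_rfl⟩, ⟨by linarith, by linarith⟩, by ring⟩

theorem convexHull_friendshipEdges :
    convexHull ℝ (rho '' friendshipEdges) = {y | FriendshipIneq 1 y} := by
  apply Set.Subset.antisymm
  · refine convexHull_min ?_ (convex_friendshipIneq 1)
    rintro _ ⟨e, he, rfl⟩
    refine ⟨fun i => ?_, ?_⟩
    · unfold rho
      split_ifs <;> norm_num
    · rw [Fin.sum_univ_seven]
      simp only [friendshipEdges, Set.mem_insert_iff, Set.mem_singleton_iff] at he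
      rcases he with rfl | rfl | rfl | rfl | rfl | rfl | rfl | rfl | rfl <;>
        norm_num [rho, Fin.ext_iff]
  · rintro y ⟨h0, hs, hm, ht⟩
    obtain ⟨r₁, r₂, r₃, ⟨hr₁, hr₁'⟩, ⟨hr₂, hr₂'⟩, ⟨hr₃, hr₃'⟩, hr⟩ := exists_split_le
      (le_min (h0 1) (h0 2)) (le_min (h0 3) (h0 4)) (le_min (h0 5) (h0 6)) (sub_nonneg.mpr ht)
      (by linarith [max_add_min (y 1) (y 2), max_add_min (y 3) (y 4), max_add_min (y 5) (y 6)])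
    rw [le_min_iff] at hr₁' hr₂' hr₃'
    let w : Fin 9 → ℝ := ![y 1 - r₁, y 2 - r₁, r₁, y 3 - r₂, y 4 - r₂, r₂, y 5 - r₃, y 6 - r₃, r₃]
    let e : Fin 9 → Sym2 (Fin 7) :=
      ![s(0, 1), s(0, 2), s(1, 2), s(0, 3), s(0, 4), s(3, 4), s(0, 5), s(0, 6), s(5, 6)]
    have hy : y = ∑ k, w k • rho (e k) := by
      simp only [Fin.sum_univ_succ, Fin.sum_univ_zero] at hs
      ext i
      fin_cases i <;> simp [w, e, rho, Fin.sum_univ_succ, Fin.ext_iff] at hs ⊢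
      linarith
    rw [hy]
    refine (convex_convexHull ℝ _).sum_mem (fun k _ => ?_) ?_ fun k _ =>
      subset_convexHull ℝ _ ⟨e k, ?_, rfl⟩
    · fin_cases k <;> simp [w] <;> linarith
    · simp [w, Fin.sum_univ_succ]
      linarith
    · fin_cases k <;> simp [e, friendshipEdges]

theorem mem_smul_convexHull_friendshipEdges {t : ℝ} (ht : 0 < t) (x : Fin 7 → ℝ) :
    x ∈ t • convexHull ℝ (rho '' friendshipEdges) ↔ FriendshipIneq t x := by
  have hmax (a b : ℝ) : max (t⁻¹ * a) (t⁻¹ * b) = t⁻¹ * max a b :=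
    (mul_max_of_nonneg a b (inv_nonneg.mpr ht.le)).symm
  rw [Set.mem_smul_set_iff_inv_smul_mem₀ ht.ne', convexHull_friendshipEdges, Set.mem_ofPred_eq]
  simp only [FriendshipIneq, Pi.smul_apply, smul_eq_mul, hmax, ← Finset.mul_sum, ← mul_add]
  rw [inv_mul_eq_iff_eq_mul₀ ht.ne', inv_mul_le_iff₀ ht, le_inv_mul_iff₀ ht]
  simp only [mul_one, mul_comm t 2]
  refine and_congr_left' (forall_congr' fun i => ?_)
  exact mul_nonneg_iff_of_pos_left (inv_pos.mpr ht)

theorem ehr_friendship (t : ℕ) :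
    ehr (convexHull ℝ (rho '' friendshipEdges)) t =
      Nat.card {p // sumMax p ≤ t ∧ t ≤ sumAll p} := by
  rcases Nat.eq_zero_or_pos t with rfl | ht
  · have : {p | sumMax p ≤ 0 ∧ 0 ≤ sumAll p} = {((0, 0), (0, 0), (0, 0))} := by
      ext ⟨⟨a, b⟩, ⟨c, d⟩, ⟨e, f⟩⟩
      simp [sumMax]
    rw [ehr, if_pos rfl]
    change 1 = Set.ncard {p | sumMax p ≤ 0 ∧ 0 ≤ sumAll p}
    rw [this, Set.ncard_singleton]
  · rw [ehr, if_neg ht.ne']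
    have key (x : Fin 7 → ℤ) : (fun i => (x i : ℝ)) ∈
        (t : ℝ) • convexHull ℝ (rho '' friendshipEdges) ↔
        (∀ i, 0 ≤ x i) ∧ ∑ i, x i = 2 * t ∧
          max (x 1) (x 2) + (max (x 3) (x 4) + max (x 5) (x 6)) ≤ t ∧
          t ≤ (x 1 + x 2) + ((x 3 + x 4) + (x 5 + x 6)) := by
      rw [mem_smul_convexHull_friendshipEdges (Nat.cast_pos.mpr ht), FriendshipIneq]
      norm_cast
    refine Nat.card_congr
      { toFun := fun x => ⟨(((x.1 1).toNat, (x.1 2).toNat), ((x.1 3).toNat, (x.1 4).toNat),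
          ((x.1 5).toNat, (x.1 6).toNat)), ?_⟩
        invFun := fun p => ⟨![2 * t - sumAll p.1, p.1.1.1, p.1.1.2, p.1.2.1.1, p.1.2.1.2,
          p.1.2.2.1, p.1.2.2.2], ?_⟩
        left_inv := ?_
        right_inv := ?_ }
    · obtain ⟨h0, -, hm, hs⟩ := (key x.1).1 x.2
      have := h0 1
      have := h0 2
      have := h0 3
      have := h0 4
      have := h0 5
      have := h0 6
      simp only [sumMax, sumAll]
      omega
    · have h1 := p.2.1
      have h2 := p.2.2
      have h3 := sumAll_le_two_mul_sumMax p.1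
      refine (key _).2 ⟨fun i => ?_, ?_, ?_, ?_⟩
      · fin_cases i <;> simp
        omega
      · simp [Fin.sum_univ_succ, sumAll]
        ring
      · simp [sumMax] at h1 ⊢
        omega
      · simp [sumAll] at h2 ⊢
        omega
    · rintro ⟨x, hx⟩
      obtain ⟨h0, hs, -, -⟩ := (key x).1 hx
      ext i
      fin_cases i <;> simp [sumAll, h0]
      simp [Fin.sum_univ_succ] at hs
      linarith
    · rintro ⟨p, hp⟩
      simp

theorem polyDim_friendship : polyDim (convexHull ℝ (rho '' friendshipEdges)) = 6 := by
  let φ : (Fin 7 → ℝ) →ₗ[ℝ] ℝ := ∑ i, LinearMap.proj i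
  have hφ (x : Fin 7 → ℝ) : φ x = ∑ i, x i := by simp [φ]
  have hspan : vectorSpan ℝ (rho '' friendshipEdges) = LinearMap.ker φ := by
    apply le_antisymm
    · rw [vectorSpan_def, Submodule.span_le]
      rintro _ ⟨x, hx, y, hy, rfl⟩
      have hsum {z : Fin 7 → ℝ} (hz : z ∈ rho '' friendshipEdges) : ∑ i, z i = 2 * 1 :=
        (convexHull_friendshipEdges.subset (subset_convexHull ℝ _ hz)).2.1
      simp [hφ, hsum hx, hsum hy]
    · intro v hv
      rw [LinearMap.mem_ker, hφ] at hv
      have hmem {a b : Sym2 (Fin 7)} (ha : a ∈ friendshipEdges) (hb : b ∈ friendshipEdges) :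
          rho b - rho a ∈ vectorSpan ℝ (rho '' friendshipEdges) :=
        vsub_mem_vectorSpan ℝ ⟨b, hb, rfl⟩ ⟨a, ha, rfl⟩
      have hv' : v = v 1 • (rho s(1, 2) - rho s(0, 2)) + v 2 • (rho s(1, 2) - rho s(0, 1)) +
          v 3 • (rho s(3, 4) - rho s(0, 4)) + v 4 • (rho s(3, 4) - rho s(0, 3)) +
          v 5 • (rho s(5, 6) - rho s(0, 6)) + v 6 • (rho s(5, 6) - rho s(0, 5)) := by
        simp only [Fin.sum_univ_succ, Fin.sum_univ_zero] at hv
        ext i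
        fin_cases i <;> simp [rho, Fin.ext_iff] at hv ⊢
        linarith
      rw [hv']
      refine add_mem (add_mem (add_mem (add_mem (add_mem ?_ ?_) ?_) ?_) ?_) ?_ <;>
        exact Submodule.smul_mem _ _ (hmem (by simp [friendshipEdges]) (by simp [friendshipEdges]))
  have hsurj : Function.Surjective φ := fun r => ⟨Pi.single 0 r, by simp [hφ]⟩
  have h := LinearMap.finrank_range_add_finrank_ker φ
  rw [LinearMap.range_eq_top.mpr hsurj, finrank_top, Module.finrank_self,
    Module.finrank_fin_fun] at h
  rw [polyDim, affineSpan_convexHull, direction_affineSpan, hspan]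
  omega

theorem deltaCoeff_friendship (i : ℕ) :
    deltaCoeff (convexHull ℝ (rho '' friendshipEdges)) i =
      ((1 + Polynomial.X) ^ 3 - Polynomial.X : Polynomial ℤ).coeff i := by
  have h : (PowerSeries.mk fun t => (ehr (convexHull ℝ (rho '' friendshipEdges)) t : ℤ)) =
      (PowerSeries.mk fun n => (Nat.card {p // sumMax p ≤ n} : ℤ)) -
        PowerSeries.mk fun n => (Nat.card {p // sumAll p < n} : ℤ) := by
    ext t
    simp [ehr_friendship, card_sumMax_le]
  rw [deltaCoeff_eq_coeff, polyDim_friendship, h, mul_comm, sub_mul, mk_card_sumMax_le_mul,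
    mk_card_sumAll_lt_mul, ← Polynomial.coeff_coe]
  simp

/-- The friendship graph `F` on `7` vertices (three triangles
`{0,1,2}, {0,3,4}, {0,5,6}` sharing the common vertex `0`, with `9` edges) has
`deg(P_F) = 3`. -/
theorem polyDeg_friendship_graph :
    polyDeg (convexHull ℝ (rho ''
      ({s((0 : Fin 7), 1), s((0 : Fin 7), 2), s((1 : Fin 7), 2),
        s((0 : Fin 7), 3), s((0 : Fin 7), 4), s((3 : Fin 7), 4),
        s((0 : Fin 7), 5), s((0 : Fin 7), 6), s((5 : Fin 7), 6)} :
          Set (Sym2 (Fin 7))))) = 3 := by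
  change polyDeg (convexHull ℝ (rho '' friendshipEdges)) = 3
  refine IsGreatest.csSup_eq ⟨?_, fun i hi => ?_⟩
  · rw [Set.mem_ofPred_eq, deltaCoeff_friendship]
    simp [Polynomial.coeff_X, Polynomial.coeff_one_add_X_pow]
  · rw [Set.mem_ofPred_eq, deltaCoeff_friendship] at hi
    refine (Polynomial.le_natDegree_of_ne_zero hi).trans ?_
    compute_degree
end
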